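/- arXiv:2104.05455 — 4 statements merged into one kernel-verified Lean document; each statement's English description precedes it below -/
import Mathlib

section
/- Let K be a field, p a prime ideal of K[Y] of height h, and Q_{S,R}(Λ,Y) a quasi-generic polynomial of base (S,R) such that the triple (p,S,R) satisfies hypothesis (H). Then the ideal generated by p and Q_{S,R} in K(Λ)[Y] is a prime ideal of height h + 1. -/
open MvPolynomial

noncomputable section


/-- The rational function field `K(T)` with variables indexed by `ι`,
realized as the fraction field of the polynomial ring. -/
abbrev RatFuncField (K : Type) [Field K] (ι : Type) : Type := FractionRing (MvPolynomial ι K)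

/-- `x ∈ K(T)` can be specialized at `t ∈ K^ι` with value `v`:
there is a representation `x = a/b` with `b(t) ≠ 0` and `v = a(t)/b(t)`. -/
def RatSpecializesTo (K : Type) [Field K] {ι : Type} (t : ι → K)
    (x : RatFuncField K ι) (v : K) : Prop :=
  ∃ a b : MvPolynomial ι K, MvPolynomial.eval t b ≠ 0 ∧
    algebraMap (MvPolynomial ι K) (RatFuncField K ι) b * x
      = algebraMap (MvPolynomial ι K) (RatFuncField K ι) a ∧
    MvPolynomial.eval t b * v = MvPolynomial.eval t a

/-- `P ∈ K(T)[Y]` specializes at `t` (coefficientwise) to `q ∈ K[Y]`. -/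
def PolySpecializesTo (K : Type) [Field K] {ι : Type} {s : ℕ} (t : ι → K)
    (P : MvPolynomial (Fin s) (RatFuncField K ι)) (q : MvPolynomial (Fin s) K) : Prop :=
  ∀ mono : Fin s →₀ ℕ, RatSpecializesTo K t (P.coeff mono) (q.coeff mono)

/-- `H` is a Hilbert subset of `K^ι`: the set of points where finitely many irreducible
polynomials of `K(T)[Y]` specialize to irreducible polynomials of `K[Y]`, intersected
with a nonempty Zariski-open subset. -/
def IsHilbertSubset (K : Type) [Field K] (ι : Type) (H : Set (ι → K)) : Prop :=
  ∃ (s l n : ℕ) (p : Fin l → MvPolynomial (Fin s) (RatFuncField K ι))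
    (g : Fin n → MvPolynomial ι K),
    (∀ i, Irreducible (p i)) ∧
    (∃ t : ι → K, ∃ j, MvPolynomial.eval t (g j) ≠ 0) ∧
    H = {t | (∃ j, MvPolynomial.eval t (g j) ≠ 0) ∧
      ∀ i, ∃ q : MvPolynomial (Fin s) K, PolySpecializesTo K t (p i) q ∧ Irreducible q}

/-- A subset of `K^ι` is Zariski-dense iff for every nonzero polynomial `g` it contains a
point where `g` does not vanish. -/
def IsZariskiDense (K : Type) [Field K] {ι : Type} (S : Set (ι → K)) : Prop :=
  ∀ g : MvPolynomial ι K, g ≠ 0 → ∃ t ∈ S, MvPolynomial.eval t g ≠ 0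

/-- A field is Hilbertian if all its Hilbert subsets (of all `K^r`, `r ≥ 1`) are
Zariski-dense. -/
def IsHilbertianField (K : Type) [Field K] : Prop :=
  ∀ r : ℕ, 0 < r → ∀ H : Set (Fin r → K), IsHilbertSubset K (Fin r) H → IsZariskiDense K H

/-- The canonical ring homomorphism `K[T,Y] → K(T)[Y]`. -/
def extHom (K : Type) [Field K] (r s : ℕ) :
    MvPolynomial (Fin r ⊕ Fin s) K →+* MvPolynomial (Fin s) (RatFuncField K (Fin r)) :=
  MvPolynomial.eval₂Hom
    ((MvPolynomial.C).comp
      ((algebraMap (MvPolynomial (Fin r) K) (RatFuncField K (Fin r))).comp MvPolynomial.C))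
    (Sum.elim
      (fun i => MvPolynomial.C
        (algebraMap (MvPolynomial (Fin r) K) (RatFuncField K (Fin r)) (MvPolynomial.X i)))
      (fun j => MvPolynomial.X j))

/-- The specialization homomorphism `K[T,Y] → K[Y]`, `T ↦ t`. -/
def specHom (K : Type) [Field K] {r s : ℕ} (t : Fin r → K) :
    MvPolynomial (Fin r ⊕ Fin s) K →+* MvPolynomial (Fin s) K :=
  MvPolynomial.eval₂Hom MvPolynomial.C
    (Sum.elim (fun i => MvPolynomial.C (t i)) (fun j => MvPolynomial.X j))

/-- `L` is a separable extension of `F` in the general sense (equivalently, `L` is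
linearly disjoint from the perfect closure of `F`, equivalently `L ⊗_F F̄` is reduced);
the extension is given by the ring homomorphism `f : F → L`. -/
def IsSepExtOfHom (F L : Type) [Field F] [CommRing L] (f : F →+* L) : Prop :=
  letI : Algebra F L := f.toAlgebra
  IsReduced (TensorProduct F (AlgebraicClosure F) L)

/-- `Frac(A)` is a separable extension of `F` in the general sense. -/
def IsSepOverBase (F : Type) [Field F] (A : Type) [CommRing A] [Algebra F A] : Prop :=
  IsSepExtOfHom F (FractionRing A) ((algebraMap A (FractionRing A)).comp (algebraMap F A))

/-- The height of an ideal: the infimum over primes containing it of the lengths of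
chains of primes below.  For a prime ideal this is the usual height. -/
def idealHeight {R : Type} [CommRing R] (I : Ideal R) : ℕ∞ :=
  ⨅ p : {q : PrimeSpectrum R // I ≤ q.asIdeal}, Order.height p.1

/-- The monomials in `s` variables of total degree at most `D`. -/
def MonLE (s D : ℕ) : Type := {m : Fin s →₀ ℕ // m.degree ≤ D}

noncomputable instance (s D : ℕ) : Fintype (MonLE s D) :=
  (Finsupp.finite_of_degree_le D).fintype

/-- The generic polynomial of degree `D`, with parameter variables `v m`, `m` a monomial of
degree at most `D`, as an element of `K[Λ][Y]`. -/
def genPoly (K : Type) [Field K] (s D : ℕ) {Λ : Type} (v : MonLE s D → Λ) :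
    MvPolynomial (Fin s) (MvPolynomial Λ K) :=
  ∑ m : MonLE s D, MvPolynomial.monomial m.1 (MvPolynomial.X (v m))

/-- The generic polynomial of degree `D` specialized at `lam ∈ K^{N_D}`. -/
def genPolyAt (K : Type) [Field K] (s D : ℕ) (lam : MonLE s D → K) :
    MvPolynomial (Fin s) K :=
  ∑ m : MonLE s D, MvPolynomial.monomial m.1 (lam m)

/-- Substitution `T_i ↦ U_i(Y)` as a ring homomorphism `K[T,Y] → K[Y]`. -/
def polySubstHom (K : Type) [Field K] {r s : ℕ} (U : Fin r → MvPolynomial (Fin s) K) :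
    MvPolynomial (Fin r ⊕ Fin s) K →+* MvPolynomial (Fin s) K :=
  MvPolynomial.eval₂Hom MvPolynomial.C (Sum.elim U (fun j => MvPolynomial.X j))

/-- The quasi-generic polynomial `Q_{S,R}(Λ,Y) = ∑_i Λ_i Q_i(Y) + R(Y)` of base `(S,R)`,
where `S = {monomial (m 0), …, monomial (m n)}`, as an element of `K[Λ][Y]`. -/
def quasiGen (K : Type) [Field K] {s n : ℕ} (m : Fin (n + 1) → (Fin s →₀ ℕ))
    (R : MvPolynomial (Fin s) K) :
    MvPolynomial (Fin s) (MvPolynomial (Fin (n + 1)) K) :=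
  (∑ i, MvPolynomial.monomial (m i) (MvPolynomial.X i)) +
    MvPolynomial.map (MvPolynomial.C) R

/-- Hypothesis (H) for the triple `(p, S, R)` (with `S` the set of monomials
`monomial (m i)`, `m 0 = 0`): the map `φ_{S,R}` sending `(a_1,…,a_n)` to the class mod `E`
of `∑_{i ≥ 1} a_i Q_i(Y) + R(Y)` in `B/E` is not identically zero, where `B = K[Y]/p` and
`E ⊆ B` is the subfield of elements algebraic over `K`. -/
def HypothesisH (K : Type) [Field K] {s n : ℕ} (p : Ideal (MvPolynomial (Fin s) K))
    (m : Fin (n + 1) → (Fin s →₀ ℕ)) (R : MvPolynomial (Fin s) K) : Prop :=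
  ∃ a : Fin (n + 1) → K,
    Ideal.Quotient.mk p ((∑ i ∈ Finset.univ.erase 0, MvPolynomial.monomial (m i) (a i)) + R)
      ∉ integralClosure K (MvPolynomial (Fin s) K ⧸ p)



namespace QGAux

lemma inj_zero (K : Type) [Field K] (B : Type) [CommRing B] [Algebra K B] (n : ℕ) (r : B)
    (hr : Transcendental K r) :
    Function.Injective (aeval (Fin.cases (-C r) X) :
      MvPolynomial (Fin (n+1)) K →ₐ[K] MvPolynomial (Fin n) B) := by
  have hr' : Function.Injective (Polynomial.aeval (R := K) (-r)) := by
    rw [← transcendental_iff_injective]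
    intro h; apply hr; simpa using h.neg
  have e : (aeval (Fin.cases (-C r) X) : MvPolynomial (Fin (n+1)) K →ₐ[K] MvPolynomial (Fin n) B)
     = ((MvPolynomial.mapAlgHom (Polynomial.aeval (R := K) (-r))).comp
        (optionEquivRight K (Fin n)).toAlgHom).comp
        (renameEquiv K (finSuccEquiv n)).toAlgHom := by
    ext i
    refine Fin.cases ?_ (fun i => ?_) i
    · simp
    · simp
  rw [e]
  have := MvPolynomial.map_injective (σ := Fin n) _ hr'
  exact (this.comp (optionEquivRight K (Fin n)).injective).comp
    (renameEquiv K (finSuccEquiv n)).injective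

lemma inj_lift {A A' : Type} [CommRing A] [CommRing A'] (φ : Polynomial A →+* Polynomial A')
    (hX : φ Polynomial.X = Polynomial.X) (φ0 : A → A') (h0 : ∀ c, φ0 c = 0 → c = 0)
    (hφ : ∀ c, (φ (Polynomial.C c)).coeff 0 = φ0 c) (p : Polynomial A) (hp : φ p = 0) : p = 0 := by
  ext k
  rw [Polynomial.coeff_zero]
  induction k generalizing p with
  | zero =>
    apply h0
    rw [← Polynomial.X_mul_divX_add p, map_add, map_mul, hX] at hp
    have := congrArg (fun q => Polynomial.coeff q 0) hp
    simpa [hφ] using this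
  | succ k ih =>
    have hc : p.coeff 0 = 0 := by
      apply h0
      rw [← Polynomial.X_mul_divX_add p, map_add, map_mul, hX] at hp
      have := congrArg (fun q => Polynomial.coeff q 0) hp
      simpa [hφ] using this
    rw [← Polynomial.coeff_divX]
    apply ih
    rw [← Polynomial.X_mul_divX_add p, map_add, map_mul, hX, hc] at hp
    ext j
    have := congrArg (fun q => Polynomial.coeff q (j+1)) hp
    simpa using this

/-- Elimination of the variable `Λ_0` via `Λ_0 = -(r + ∑ q_i Λ_i)`. -/
def elim0 {T : Type} [CommRing T] {n : ℕ} (q : Fin n → T) (r : T) :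
    MvPolynomial (Fin (n+1)) T →ₐ[T] MvPolynomial (Fin n) T :=
  aeval (Fin.cases (-(C r + ∑ i, C (q i) * X i)) X)

/-- The linear polynomial. -/
def lin {T : Type} [CommRing T] {n : ℕ} (q : Fin n → T) (r : T) : MvPolynomial (Fin (n+1)) T :=
  X 0 + (C r + ∑ i, C (q i) * X i.succ)

lemma elim0_lin {T : Type} [CommRing T] {n : ℕ} (q : Fin n → T) (r : T) :
    elim0 q r (lin q r) = 0 := by
  simp [elim0, lin, algebraMap_eq]

lemma elim0_ker {T : Type} [CommRing T] {n : ℕ} (q : Fin n → T) (r : T)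
    (x : MvPolynomial (Fin (n+1)) T) (hx : elim0 q r x = 0) : x ∈ Ideal.span {lin q r} := by
  have e : (Ideal.Quotient.mkₐ T (Ideal.span {lin q r})) =
      ((Ideal.Quotient.mkₐ T (Ideal.span {lin q r})).comp (rename Fin.succ)).comp (elim0 q r) := by
    ext i
    refine Fin.cases ?_ (fun i => ?_) i
    · simp only [AlgHom.comp_apply, Ideal.Quotient.mkₐ_eq_mk]
      rw [Ideal.Quotient.eq]
      simp only [elim0, aeval_X, Fin.cases_zero]
      apply Ideal.subset_span
      simp [lin]
      ring
    · simp [elim0]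
  have h2 := DFunLike.congr_fun e x
  rw [AlgHom.comp_apply, hx, map_zero] at h2
  exact Ideal.Quotient.eq_zero_iff_mem.1 h2

lemma inj_elim (K : Type) [Field K] (B : Type) [CommRing B] [Algebra K B] (n : ℕ)
    (q : Fin n → B) (r : B) (a : Fin n → K)
    (hr : Transcendental K (r + ∑ i, algebraMap K B (a i) * q i))
    (x : MvPolynomial (Fin (n+1)) K)
    (hx : elim0 q r (MvPolynomial.map (algebraMap K B) x) = 0) : x = 0 := by
  set ρ := r + ∑ i, algebraMap K B (a i) * q i with hρ
  let sub : MvPolynomial (Fin n) B →ₐ[B] Polynomial (MvPolynomial (Fin n) B) :=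
    aeval (fun i => Polynomial.C (C (algebraMap K B (a i))) + Polynomial.X * Polynomial.C (X i))
  let J : MvPolynomial (Fin (n+1)) K →ₐ[K] Polynomial (MvPolynomial (Fin (n+1)) K) :=
    aeval (Fin.cases (Polynomial.C (X 0))
      (fun i => Polynomial.C (C (a i)) + Polynomial.X * Polynomial.C (X i.succ)))
  let J' : Polynomial (MvPolynomial (Fin (n+1)) K) →ₐ[K] MvPolynomial (Fin (n+1)) K :=
    Polynomial.aevalTower (aeval (Fin.cases (X 0) (fun i => X i.succ - C (a i)))) 1
  let N0 : MvPolynomial (Fin (n+1)) K →ₐ[K] Polynomial (MvPolynomial (Fin n) B) :=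
    aeval (Fin.cases (-(Polynomial.C (C ρ) + Polynomial.X * Polynomial.C (∑ i, C (q i) * X i)))
      (fun i => Polynomial.C (X i)))
  let N : Polynomial (MvPolynomial (Fin (n+1)) K) →ₐ[K] Polynomial (MvPolynomial (Fin n) B) :=
    Polynomial.aevalTower N0 Polynomial.X
  have hJ : J'.comp J = AlgHom.id K _ := by
    ext i
    refine Fin.cases ?_ (fun i => ?_) i
    · simp [J, J']
    · simp [J, J']
  have hNJ : N.comp J = ((sub.restrictScalars K).comp ((elim0 q r).restrictScalars K)).comp
      (mapAlgHom (Algebra.ofId K B)) := by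
    apply MvPolynomial.algHom_ext
    intro i
    refine Fin.cases ?_ (fun i => ?_) i
    · simp [J, N, N0, sub, elim0, hρ, Finset.mul_sum, mul_add, Finset.sum_add_distrib,
        algebraMap_eq]
      simp only [mul_comm, mul_left_comm]
      abel
    · simp [J, N, N0, sub, elim0]
  have h1 : N (J x) = 0 := by
    have := DFunLike.congr_fun hNJ x
    rw [AlgHom.comp_apply] at this
    rw [this]
    have h3 : (elim0 q r) ((mapAlgHom (Algebra.ofId K B)) x) = 0 := hx
    simp only [AlgHom.comp_apply, AlgHom.restrictScalars_apply, h3, map_zero]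
  have h2 : J x = 0 := by
    refine inj_lift N.toRingHom (by simp [N])
      (aeval (Fin.cases (-C ρ) X) : MvPolynomial (Fin (n+1)) K →ₐ[K] MvPolynomial (Fin n) B)
      (fun c hc => inj_zero K B n ρ hr (by rw [hc, map_zero])) (fun c => ?_) _ h1
    have : ((Polynomial.aeval (R := MvPolynomial (Fin n) B) (0 : MvPolynomial (Fin n) B)).restrictScalars K).comp N0
       = (aeval (Fin.cases (-C ρ) X) : MvPolynomial (Fin (n+1)) K →ₐ[K] MvPolynomial (Fin n) B) := by
      apply MvPolynomial.algHom_ext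
      intro i
      refine Fin.cases ?_ (fun i => ?_) i
      · simp [N0]
      · simp [N0]
    rw [← this]
    simp [N, Polynomial.coeff_zero_eq_aeval_zero]
  have := DFunLike.congr_fun hJ x
  rw [AlgHom.comp_apply, h2, map_zero] at this
  exact this.symm

lemma main_aux {T : Type} [CommRing T] [IsNoetherianRing T] {n : ℕ} (q : Fin n → T) (r : T)
    (p : Ideal T) [hp : p.IsPrime] :
    (Ideal.map C p ⊔ Ideal.span {lin q r}).IsPrime ∧
    (Ideal.map C p ⊔ Ideal.span {lin q r}).height = p.height + 1 ∧
    ∀ x ∈ Ideal.map C p ⊔ Ideal.span {lin q r},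
      elim0 (fun i => Ideal.Quotient.mk p (q i)) (Ideal.Quotient.mk p r)
        (MvPolynomial.map (Ideal.Quotient.mk p) x) = 0 := by
  set P := Ideal.map C p ⊔ Ideal.span {lin q r} with hP
  let q' := fun i => Ideal.Quotient.mk p (q i)
  let r' := Ideal.Quotient.mk p r
  have hlin : MvPolynomial.map (Ideal.Quotient.mk p) (lin q r) = lin q' r' := by
    simp [lin, q', r']
  let Ψ : MvPolynomial (Fin (n+1)) T →+* MvPolynomial (Fin n) (T ⧸ p) :=
    (elim0 q' r').toRingHom.comp (MvPolynomial.map (Ideal.Quotient.mk p))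
  have hΨ : ∀ x, Ψ x = elim0 q' r' (MvPolynomial.map (Ideal.Quotient.mk p) x) := fun _ => rfl
  have hkm : RingHom.ker (MvPolynomial.map (σ := Fin (n+1)) (Ideal.Quotient.mk p)) =
      Ideal.map C p := by rw [MvPolynomial.ker_map, Ideal.mk_ker]
  have hsurj : Function.Surjective (MvPolynomial.map (σ := Fin (n+1)) (Ideal.Quotient.mk p)) :=
    MvPolynomial.map_surjective _ Ideal.Quotient.mk_surjective
  have hker : RingHom.ker Ψ = P := by
    apply le_antisymm
    · intro x hx
      rw [RingHom.mem_ker, hΨ] at hx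
      have h1 := elim0_ker _ _ _ hx
      rw [← hlin, ← Set.image_singleton, ← Ideal.map_span] at h1
      have h2 : x ∈ Ideal.comap _ (Ideal.map (MvPolynomial.map (Ideal.Quotient.mk p))
        (Ideal.span {lin q r})) := h1
      rw [Ideal.comap_map_of_surjective _ hsurj, ← RingHom.ker_eq_comap_bot, hkm, sup_comm] at h2
      exact h2
    · rw [hP, sup_le_iff, Ideal.span_singleton_le_iff_mem, ← hkm]
      constructor
      · intro x hx
        rw [RingHom.mem_ker] at hx ⊢
        rw [hΨ, hx, map_zero]
      · rw [RingHom.mem_ker, hΨ, hlin, elim0_lin]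
  have hprime : P.IsPrime := hker ▸ RingHom.ker_isPrime Ψ
  refine ⟨hprime, ?_, fun x hx => by rw [← hker] at hx; exact hx⟩
  have hpp : (Ideal.map (algebraMap T (MvPolynomial (Fin (n+1)) T)) p).IsPrime := by
    rw [algebraMap_eq, ← hkm]; exact RingHom.ker_isPrime _
  have : P.LiesOver p := by
    constructor
    ext x
    rw [Ideal.under_def, Ideal.mem_comap, ← hker, RingHom.mem_ker, hΨ, algebraMap_eq, map_C,
      ← algebraMap_eq, AlgHom.commutes, algebraMap_eq, map_eq_zero_iff _ (C_injective _ _),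
      Ideal.Quotient.eq_zero_iff_mem]
  rw [Ideal.height_eq_height_add_of_liesOver_of_hasGoingDown p P]
  congr 1
  set I := Ideal.map (algebraMap T (MvPolynomial (Fin (n+1)) T)) p with hI
  have hIP : I ≤ P := le_sup_left
  have hdom : IsDomain (MvPolynomial (Fin (n+1)) T ⧸ I) := Ideal.Quotient.isDomain _
  have hmap : P.map (Ideal.Quotient.mk I) = Ideal.span {Ideal.Quotient.mk I (lin q r)} := by
    rw [hP, Ideal.map_sup, Ideal.map_span, Set.image_singleton]
    rw [show Ideal.map (Ideal.Quotient.mk I) (Ideal.map C p) = ⊥ from Ideal.map_quotient_self I,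
      bot_sup_eq]
  have hpr : (P.map (Ideal.Quotient.mk I)).IsPrime :=
    Ideal.map_isPrime_of_surjective Ideal.Quotient.mk_surjective (by rwa [Ideal.mk_ker])
  apply le_antisymm
  · refine Ideal.height_le_one_of_isPrincipal_of_mem_minimalPrimes
      (Ideal.span {Ideal.Quotient.mk I (lin q r)}) _ ?_
    rw [← hmap, Ideal.minimalPrimes_eq_subsingleton_self]
    rfl
  · rw [Order.one_le_iff_ne_zero, Ne, Ideal.height_eq_zero_iff_eq_bot, hmap,
      Ideal.span_singleton_eq_bot, Ideal.Quotient.eq_zero_iff_mem, hI, algebraMap_eq, ← hkm,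
      RingHom.mem_ker, hlin]
    intro h0
    have h1 := congrArg (aeval (Fin.cases (1 - r') (fun _ => 0) : Fin (n+1) → T ⧸ p)) h0
    simp [lin] at h1

lemma map_sup_span {A A' A'' : Type} [CommRing A] [CommRing A'] [CommRing A''] (f : A →+* A')
    (g : A' →+* A'') (f' : A →+* A'') (p : Ideal A) (x : A') (y : A'')
    (hf : ∀ z, g (f z) = f' z) (hx : g x = y) :
    Ideal.map g (Ideal.map f p ⊔ Ideal.span {x}) = Ideal.map f' p ⊔ Ideal.span {y} := by
  have h : g.comp f = f' := RingHom.ext hf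
  rw [Ideal.map_sup, Ideal.map_map, Ideal.map_span, Set.image_singleton, h, hx]

lemma map_sup_span_equiv {A A' A'' : Type} [CommRing A] [CommRing A'] [CommRing A'']
    (f : A →+* A')
    (g : A' ≃+* A'') (f' : A →+* A'') (p : Ideal A) (x : A') (y : A'')
    (hf : ∀ z, g (f z) = f' z) (hx : g x = y) :
    Ideal.map g (Ideal.map f p ⊔ Ideal.span {x}) = Ideal.map f' p ⊔ Ideal.span {y} :=
  map_sup_span f (g : A' →+* A'') f' p x y hf hx

lemma exists_comm (K : Type) [Field K] (s n : ℕ) :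
    ∃ e : MvPolynomial (Fin n) (MvPolynomial (Fin s) K) ≃+*
        MvPolynomial (Fin s) (MvPolynomial (Fin n) K),
      (∀ x, e (C x) = MvPolynomial.map C x) ∧ (∀ i, e (X i) = C (X i)) ∧
      (∀ c, e (MvPolynomial.map C c) = C c) := by
  refine ⟨(commAlgEquiv K (Fin n) (Fin s)).toRingEquiv, fun x => commAlgEquiv_C x,
    fun i => commAlgEquiv_X i, fun c => ?_⟩
  have h6 : ((commAlgEquiv K (Fin n) (Fin s)).toAlgHom.comp
      (mapAlgHom (Algebra.ofId K (MvPolynomial (Fin s) K)))) =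
      IsScalarTower.toAlgHom K (MvPolynomial (Fin n) K)
        (MvPolynomial (Fin s) (MvPolynomial (Fin n) K)) := by
    apply MvPolynomial.algHom_ext
    intro i
    simp [algebraMap_eq]
  exact DFunLike.congr_fun h6 c

lemma step (K : Type) [Field K] (s n : ℕ)
    (m : Fin (n + 1) → (Fin s →₀ ℕ)) (hm0 : m 0 = 0)
    (R : MvPolynomial (Fin s) K)
    (p : Ideal (MvPolynomial (Fin s) K)) (hp : p.IsPrime)
    (hH : HypothesisH K p m R) (P' : Ideal (MvPolynomial (Fin s) (MvPolynomial (Fin (n+1)) K)))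
    (hP' : P' = Ideal.map (MvPolynomial.map C) p ⊔ Ideal.span {quasiGen K m R}) :
    P'.IsPrime ∧ P'.height = p.height + 1 ∧ ∀ c, C c ∈ P' → c = 0 := by
  let q : Fin n → MvPolynomial (Fin s) K := fun i => monomial (m i.succ) 1
  obtain ⟨h1, h2, h3⟩ := QGAux.main_aux q R p
  obtain ⟨e, heC, heX, hemap⟩ := exists_comm K s (n+1)
  have helin : e (QGAux.lin q R) = quasiGen K m R := by
    have hmon : ∀ i, MvPolynomial.monomial (m i) (X i : MvPolynomial (Fin (n+1)) K) =
        MvPolynomial.map C (monomial (m i) 1) * C (X i) := by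
      intro i
      rw [map_monomial, mul_comm, C_mul_monomial, map_one, mul_one]
    simp only [QGAux.lin, quasiGen, map_add, map_sum, map_mul, heC, heX, q, hmon]
    rw [Fin.sum_univ_succ, hm0]
    simp
    ring
  have hPe : P' = Ideal.map e (Ideal.map C p ⊔ Ideal.span {QGAux.lin q R}) := by
    rw [hP']
    exact (QGAux.map_sup_span_equiv C e (MvPolynomial.map C) p _ _ heC helin).symm
  refine ⟨?_, ?_, ?_⟩
  · rw [hPe]; exact Ideal.map_isPrime_of_equiv e
  · rw [hPe, e.height_map, h2]
  · intro c hc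
    have hmem : MvPolynomial.map C c ∈ Ideal.map C p ⊔ Ideal.span {QGAux.lin q R} := by
      rw [hPe, ← hemap] at hc
      obtain ⟨x, hx, hxe⟩ := (Ideal.mem_map_of_equiv e _).1 hc
      exact e.injective hxe ▸ hx
    obtain ⟨a, ha⟩ := hH
    refine QGAux.inj_elim K (MvPolynomial (Fin s) K ⧸ p) n (fun i => Ideal.Quotient.mk p (q i))
      (Ideal.Quotient.mk p R) (fun i => a i.succ) ?_ c ?_
    · intro hal
      apply ha
      rw [mem_integralClosure_iff]
      have hint := isAlgebraic_iff_isIntegral.1 hal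
      convert hint using 1
      have hs : ∑ i ∈ Finset.univ.erase 0, MvPolynomial.monomial (m i) (a i) =
          ∑ i : Fin n, C (a i.succ) * q i := by
        have := Finset.add_sum_erase Finset.univ
          (fun i => MvPolynomial.monomial (m i) (a i)) (Finset.mem_univ 0)
        rw [Fin.sum_univ_succ] at this
        rw [add_left_cancel this]
        simp [q, C_mul_monomial]
      rw [hs, map_add, add_comm, map_sum]
      simp only [map_mul]
      rfl
    · have := h3 _ hmem
      rw [MvPolynomial.map_map] at this
      exact this

lemma idealHeight_eq {A : Type} [CommRing A] (I : Ideal A) (hI : I.IsPrime) :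
    idealHeight I = I.height := by
  rw [show I.height = Order.height (⟨I, hI⟩ : PrimeSpectrum A) from
    PrimeSpectrum.height_eq_orderHeight ⟨I, hI⟩]
  unfold idealHeight
  apply le_antisymm
  · exact iInf_le (fun p : {q : PrimeSpectrum A // I ≤ q.asIdeal} => Order.height p.1)
      ⟨⟨I, hI⟩, le_refl _⟩
  · exact le_iInf fun p => Order.height_mono p.2

attribute [local instance] MvPolynomial.algebraMvPolynomial

lemma step2 (K : Type) [Field K] (s n : ℕ)
    (P' : Ideal (MvPolynomial (Fin s) (MvPolynomial (Fin n) K)))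
    (h1 : P'.IsPrime) (h3 : ∀ c, C c ∈ P' → c = 0) :
    (Ideal.map (MvPolynomial.map (algebraMap (MvPolynomial (Fin n) K)
      (RatFuncField K (Fin n)))) P').IsPrime ∧
    (Ideal.map (MvPolynomial.map (algebraMap (MvPolynomial (Fin n) K)
      (RatFuncField K (Fin n)))) P').height = P'.height := by
  let M : Submonoid (MvPolynomial (Fin s) (MvPolynomial (Fin n) K)) :=
    (nonZeroDivisors (MvPolynomial (Fin n) K)).map (C (σ := Fin s))
  have : IsLocalization M (MvPolynomial (Fin s) (RatFuncField K (Fin n))) :=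
    MvPolynomial.isLocalization _ _
  have hdisj : Disjoint (M : Set (MvPolynomial (Fin s) (MvPolynomial (Fin n) K)))
      (P' : Set (MvPolynomial (Fin s) (MvPolynomial (Fin n) K))) := by
    rw [Set.disjoint_left]
    rintro _ ⟨c, hc, rfl⟩ hcP
    exact nonZeroDivisors.ne_zero hc (h3 c hcP)
  exact ⟨IsLocalization.isPrime_of_isPrime_disjoint M
    (MvPolynomial (Fin s) (RatFuncField K (Fin n))) P' h1 hdisj,
    IsLocalization.height_map_of_disjoint M P' hdisj⟩

end QGAux

/-- (Key lemma on quasi-generic polynomials.) If `p ⊆ K[Y]` is a prime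
ideal of height `h` and `Q_{S,R}(Λ,Y)` is a quasi-generic polynomial of base `(S,R)` such
that `(p,S,R)` satisfies hypothesis (H), then the ideal `⟨p, Q_{S,R}⟩` of `K(Λ)[Y]` is a
prime ideal of height `h + 1`. -/
theorem stmt_5 (K : Type) [Field K] (s n D : ℕ)
    (m : Fin (n + 1) → (Fin s →₀ ℕ)) (hdeg : ∀ i, (m i).degree ≤ D)
    (hm0 : m 0 = 0) (hminj : Function.Injective m)
    (R : MvPolynomial (Fin s) K)
    (p : Ideal (MvPolynomial (Fin s) K)) (hp : p.IsPrime)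
    (h : ℕ∞) (hh : idealHeight p = h)
    (hH : HypothesisH K p m R) :
    (Ideal.map (MvPolynomial.map
        ((algebraMap (MvPolynomial (Fin (n + 1)) K) (RatFuncField K (Fin (n + 1)))).comp
          MvPolynomial.C)) p ⊔
      Ideal.span {MvPolynomial.map
        (algebraMap (MvPolynomial (Fin (n + 1)) K) (RatFuncField K (Fin (n + 1))))
        (quasiGen K m R)}).IsPrime ∧
    idealHeight
      (Ideal.map (MvPolynomial.map
        ((algebraMap (MvPolynomial (Fin (n + 1)) K) (RatFuncField K (Fin (n + 1)))).comp
          MvPolynomial.C)) p ⊔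
      Ideal.span {MvPolynomial.map
        (algebraMap (MvPolynomial (Fin (n + 1)) K) (RatFuncField K (Fin (n + 1))))
        (quasiGen K m R)}) = h + 1 := by
  obtain ⟨h1, h2, h3⟩ := QGAux.step K s n m hm0 R p hp hH _ rfl
  obtain ⟨h4, h5⟩ := QGAux.step2 K s (n+1) _ h1 h3
  rw [h2, ← QGAux.idealHeight_eq p hp, hh, ← QGAux.idealHeight_eq _ h4] at h5
  rw [QGAux.map_sup_span _ _ _ p _ _ (fun x => MvPolynomial.map_map _ _ x) rfl] at h4 h5
  exact ⟨h4, h5⟩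
end
end

section
/- Let K be a field, Y = (Y_1,…,Y_s) a tuple of variables, p a non-maximal prime ideal of K[Y], S a set of monomials in Y of degree ≤ D containing 1, and R(Y) ∈ K[Y]. If each variable Y_1,…,Y_s belongs to S ∪ {R(Y)}, then the triple (p,S,R) satisfies hypothesis (H). -/
open MvPolynomial

noncomputable section

/-- If `p` is a non-maximal prime ideal of `K[Y]` and every variable
`Y_j` belongs to `S ∪ {R}`, then the triple `(p,S,R)` satisfies hypothesis (H). -/
theorem stmt_7 (K : Type) [Field K] (s n D : ℕ)
    (m : Fin (n + 1) → (Fin s →₀ ℕ)) (hdeg : ∀ i, (m i).degree ≤ D)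
    (hm0 : m 0 = 0) (hminj : Function.Injective m)
    (R : MvPolynomial (Fin s) K)
    (p : Ideal (MvPolynomial (Fin s) K)) (hp : p.IsPrime) (hpmax : ¬ p.IsMaximal)
    (hY : ∀ j : Fin s, (∃ i, m i = Finsupp.single j 1) ∨ R = MvPolynomial.X j) :
    HypothesisH K p m R := by
  classical
  by_contra hcon
  unfold HypothesisH at hcon
  push Not at hcon
  have hR : Ideal.Quotient.mk p R ∈ integralClosure K (MvPolynomial (Fin s) K ⧸ p) := by
    simpa using hcon 0
  have hX : ∀ j : Fin s, Ideal.Quotient.mk p (X j) ∈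
      integralClosure K (MvPolynomial (Fin s) K ⧸ p) := by
    intro j
    rcases hY j with ⟨i, hi⟩ | h
    · have hi0 : i ≠ 0 := by
        rintro rfl
        rw [hm0] at hi
        have := DFunLike.congr_fun hi j
        simp at this
      have h1 := hcon (Pi.single i 1)
      have h2 : (∑ k ∈ Finset.univ.erase (0 : Fin (n + 1)),
          MvPolynomial.monomial (m k) ((Pi.single i 1 : Fin (n + 1) → K) k)) = X j := by
        rw [Finset.sum_eq_single_of_mem i (by simp [hi0])]
        · simp [hi, X]
        · intro k _ hk
          simp [Pi.single_eq_of_ne hk]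
      rw [h2, map_add] at h1
      simpa using sub_mem h1 hR
    · rw [← h]; exact hR
  have hall : ∀ q : MvPolynomial (Fin s) K, Ideal.Quotient.mk p q ∈
      integralClosure K (MvPolynomial (Fin s) K ⧸ p) := by
    intro q
    induction q using MvPolynomial.induction_on with
    | C a => exact (integralClosure K (MvPolynomial (Fin s) K ⧸ p)).algebraMap_mem a
    | add f g hf hg => rw [map_add]; exact add_mem hf hg
    | mul_X f j hf => rw [map_mul]; exact mul_mem hf (hX j)
  have hint : Algebra.IsIntegral K (MvPolynomial (Fin s) K ⧸ p) := by
    constructor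
    intro x
    obtain ⟨q, rfl⟩ := Ideal.Quotient.mk_surjective x
    exact hall q
  exact hpmax (Ideal.Quotient.maximal_of_isField p
    (isField_of_isIntegral_of_isField' (Field.toIsField K)))
end
end

section
/- Let K be a field and p a non-maximal prime ideal of K[Y] such that the Krull dimension of K[Y]/p equals d > 0. Fix an integer ρ with 0 < ρ ≤ d and integers D_1,…,D_ρ ≥ 1, and let Q_{D_1}(Λ_1,Y),…,Q_{D_ρ}(Λ_ρ,Y) be the generic polynomials of degrees D_1,…,D_ρ in pairwise disjoint parameter tuples Λ_1,…,Λ_ρ; write ΛΛ = (Λ_1,…,Λ_ρ). Then the ideal P_ρ = ⟨p, Q_{D_1},…,Q_{D_ρ}⟩ of K[ΛΛ,Y] is prime, P_ρ ∩ K[ΛΛ] = {0}, and the extension P̃_ρ of P_ρ to K(ΛΛ)[Y] is a prime ideal such that K(ΛΛ)[Y]/P̃_ρ has Krull dimension d − ρ. -/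
open MvPolynomial

noncomputable section

/-- The index type of the parameters `ΛΛ = (Λ_1,…,Λ_ρ)` of `ρ` generic polynomials of
degrees `D 1, …, D ρ` in `s` variables (the tuples being pairwise disjoint). -/
def LamIdx (s ρ : ℕ) (D : Fin ρ → ℕ) : Type := (i : Fin ρ) × MonLE s (D i)


theorem aux_dim_integral {R S : Type} [CommRing R] [CommRing S] [Algebra R S]
    [Algebra.IsIntegral R S] [FaithfulSMul R S] : ringKrullDim S = ringKrullDim R := by
  apply le_antisymm
  · refine Order.krullDim_le_of_strictMono (PrimeSpectrum.comap (algebraMap R S)) ?_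
    intro a b h
    exact Ideal.IsIntegral.comap_lt_comap (R := R) (I := a.asIdeal) (J := b.asIdeal) h
  · refine iSup_le fun l => ?_
    obtain ⟨⟨Q, hQ, hQ2⟩⟩ := Ideal.nonempty_primesOver (S := S) (RelSeries.head l).asIdeal
    obtain ⟨L, h1, -, -⟩ := Ideal.exists_ltSeries_of_hasGoingUp (S := S) l Q
    rw [← h1]
    exact le_iSup (fun p : LTSeries (PrimeSpectrum S) => (p.length : WithBot ℕ∞)) L

theorem aux_dim_trdeg (F A : Type) [Field F] [CommRing A] [IsDomain A] [Algebra F A]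
    [Algebra.FiniteType F A] : ∃ n : ℕ, ringKrullDim A = (n : WithBot ℕ∞) ∧
      Algebra.trdeg F A = (n : Cardinal) := by
  obtain ⟨n, g, hg, hi⟩ := exists_integral_inj_algHom_of_fg F A
  refine ⟨n, ?_, ?_⟩
  · let _ := g.toRingHom.toAlgebra
    have : Algebra.IsIntegral (MvPolynomial (Fin n) F) A := ⟨hi⟩
    have : FaithfulSMul (MvPolynomial (Fin n) F) A :=
      (faithfulSMul_iff_algebraMap_injective _ _).2 hg
    rw [aux_dim_integral (R := MvPolynomial (Fin n) F)]
    simp [MvPolynomial.ringKrullDim_of_isNoetherianRing]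
  · let _ := g.toRingHom.toAlgebra
    have : Algebra.IsIntegral (MvPolynomial (Fin n) F) A := ⟨hi⟩
    have : FaithfulSMul (MvPolynomial (Fin n) F) A :=
      (faithfulSMul_iff_algebraMap_injective _ _).2 hg
    have : IsScalarTower F (MvPolynomial (Fin n) F) A := IsScalarTower.of_algHom g
    rw [← trdeg_add_eq F (MvPolynomial (Fin n) F) (A := A),
      trdeg_eq_zero (R := MvPolynomial (Fin n) F) (A := A)]
    simp

theorem aux_monomial {R σ : Type} [CommRing R] (w : σ → ℕ) (f : σ → Polynomial R)
    (hf : ∀ j, (f j).natDegree ≤ w j) (m : σ →₀ ℕ) :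
    (m.prod fun j k => f j ^ k).natDegree ≤ Finsupp.weight w m ∧
    (m.prod fun j k => f j ^ k).coeff (Finsupp.weight w m) =
      m.prod fun j k => (f j).coeff (w j) ^ k := by
  classical
  induction m using Finsupp.induction with
  | zero => simp
  | single_add a b m ha hb ih =>
    have h1 : (f a ^ b).natDegree ≤ b * w a := Polynomial.natDegree_pow_le_of_le _ (hf a)
    rw [Finsupp.prod_add_index' (by simp) (by intros; rw [pow_add]),
      Finsupp.prod_add_index' (by simp) (by intros; rw [pow_add]), map_add,
      Finsupp.prod_single_index (by simp), Finsupp.prod_single_index (by simp),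
      Finsupp.weight_single, smul_eq_mul]
    refine ⟨Polynomial.natDegree_mul_le_of_le h1 ih.1, ?_⟩
    rw [Polynomial.coeff_mul_add_eq_of_natDegree_le h1 ih.1, ih.2,
      Polynomial.coeff_pow_of_natDegree_le (hf a)]

theorem aux_indep {K R σ : Type} [Field K] [CommRing R] [Algebra K R] (w : σ → ℕ)
    (f : σ → Polynomial R) (hf : ∀ j, (f j).natDegree ≤ w j)
    (hc : AlgebraicIndependent K (fun j => (f j).coeff (w j))) : AlgebraicIndependent K f := by
  classical
  rw [algebraicIndependent_iff] at hc ⊢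
  intro g hg
  by_contra hg0
  set N := weightedTotalDegree w g
  have key : (aeval f g).coeff N =
      aeval (fun j => (f j).coeff (w j)) (weightedHomogeneousComponent w N g) := by
    rw [weightedHomogeneousComponent_apply, map_sum, Finset.sum_filter]
    conv_lhs => rw [g.as_sum, map_sum, Polynomial.finsetSum_coeff]
    refine Finset.sum_congr rfl fun m hm => ?_
    have hle : Finsupp.weight w m ≤ N := le_weightedTotalDegree w hm
    obtain ⟨h1, h2⟩ := aux_monomial w f hf m
    rw [aeval_monomial, aeval_monomial, IsScalarTower.algebraMap_apply K R (Polynomial R),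
      Polynomial.algebraMap_eq, Polynomial.coeff_C_mul]
    split_ifs with h
    · rw [← h, h2]
    · rw [Polynomial.coeff_eq_zero_of_natDegree_lt (by omega), mul_zero]
  rw [hg] at key
  have h0 := hc _ key.symm
  obtain ⟨m, hm, hmN⟩ : ∃ m ∈ g.support, Finsupp.weight w m = N := by
    have := Finset.exists_mem_eq_sup g.support (by simpa using hg0) (fun s => Finsupp.weight w s)
    obtain ⟨m, hm, h⟩ := this
    exact ⟨m, hm, h.symm⟩
  have := congrArg (coeff m) h0
  rw [coeff_weightedHomogeneousComponent, if_pos hmN] at this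
  simp at this hm
  exact hm this

/-- The nonconstant parameters. -/
abbrev AuxLp (s ρ : ℕ) (D : Fin ρ → ℕ) : Type := {x : LamIdx s ρ D // x.2.1 ≠ 0}

instance auxFinLam (s ρ : ℕ) (D : Fin ρ → ℕ) : Finite (LamIdx s ρ D) := by
  unfold LamIdx; infer_instance

/-- The constant monomial. -/
def auxZero (s D : ℕ) : MonLE s D := ⟨0, by simp⟩

/-- Images of the parameters. -/
def auxTheta {B : Type} [CommRing B] {s ρ : ℕ} (e : (Fin s →₀ ℕ) → B)
    (D : Fin ρ → ℕ) (x : LamIdx s ρ D) : MvPolynomial (AuxLp s ρ D) B :=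
  open Classical in
  if h : x.2.1 ≠ 0 then X ⟨x, h⟩ else
    - ∑ m : MonLE s (D x.1), if h : m.1 ≠ 0 then
      C (e m.1) * X ⟨⟨x.1, m⟩, h⟩ else 0

/-- Splitting the parameters into constant and nonconstant ones. -/
def auxEquiv (s ρ : ℕ) (D : Fin ρ → ℕ) : LamIdx s ρ D ≃ AuxLp s ρ D ⊕ Fin ρ :=
  open Classical in
  { toFun := fun x => if h : x.2.1 ≠ 0 then Sum.inl ⟨x, h⟩ else Sum.inr x.1
    invFun := fun y => match y with
      | Sum.inl x => x.1
      | Sum.inr i => ⟨i, auxZero s (D i)⟩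
    left_inv := by
      rintro ⟨i, m, hm⟩
      by_cases h : m = 0
      · subst h
        simp only [ne_eq, not_true, dite_false]
        rfl
      · simp only [ne_eq, h, not_false_eq_true, dite_true]
        rfl
    right_inv := by
      rintro (⟨x, hx⟩ | i)
      · simp only [hx, dite_true, ne_eq, not_false_eq_true]
      · exact dif_neg (fun h => h rfl) }

theorem auxTheta_indep {K B : Type} [Field K] [CommRing B] [Algebra K B] {s ρ : ℕ}
    (e : (Fin s →₀ ℕ) → B) (D : Fin ρ → ℕ) (hD : ∀ i, 1 ≤ D i) (j : Fin ρ → Fin s)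
    (hj : AlgebraicIndependent K (fun i => e (Finsupp.single (j i) 1))) :
    AlgebraicIndependent K (auxTheta e D) := by
  classical
  let a : Fin ρ → LamIdx s ρ D := fun i => ⟨i, ⟨Finsupp.single (j i) 1, by simpa using hD i⟩⟩
  have ha : ∀ i, (a i).2.1 ≠ 0 := fun i => by simp [a]
  let A : Fin ρ → AuxLp s ρ D := fun i => ⟨a i, ha i⟩
  -- the monomial change of variables
  let tau : LamIdx s ρ D → MvPolynomial (LamIdx s ρ D) K := fun x =>
    if x.2.1 ≠ 0 then X x else - X x * X (a x.1)
  have htau : AlgebraicIndependent K tau := by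
    let kap : MvPolynomial (LamIdx s ρ D) K →ₐ[K] FractionRing (MvPolynomial (LamIdx s ρ D) K) :=
      aeval fun x => if x.2.1 ≠ 0 then algebraMap _ _ (X x : MvPolynomial (LamIdx s ρ D) K)
        else - algebraMap _ _ (X x : MvPolynomial (LamIdx s ρ D) K) /
          algebraMap _ _ (X (a x.1) : MvPolynomial (LamIdx s ρ D) K)
    apply AlgebraicIndependent.of_comp kap
    have : kap ∘ tau = (IsScalarTower.toAlgHom K (MvPolynomial (LamIdx s ρ D) K)
        (FractionRing (MvPolynomial (LamIdx s ρ D) K))) ∘ X := by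
      funext x
      by_cases h : x.2.1 = 0
      · have h2 : algebraMap (MvPolynomial (LamIdx s ρ D) K)
          (FractionRing (MvPolynomial (LamIdx s ρ D) K)) (X (a x.1)) ≠ 0 := by
          simp [X_ne_zero]
        simp [tau, kap, h, ha]
      · simp [tau, kap, h]
    rw [this]
    exact (algebraicIndependent_X _ _).map' (IsFractionRing.injective _ _)
  have hmu : AlgebraicIndependent K (fun x : LamIdx s ρ D => if h : x.2.1 ≠ 0 then
      (X ⟨x, h⟩ : MvPolynomial (AuxLp s ρ D) B) else C (e (Finsupp.single (j x.1) 1))) := by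
    have := (hj.sumElim_comp (algebraicIndependent_X (AuxLp s ρ D) B)).comp (auxEquiv s ρ D)
      (auxEquiv s ρ D).injective
    convert this using 1
    funext x
    by_cases h : x.2.1 = 0
    · simp [auxEquiv, h]
    · simp [auxEquiv, h]
  have hc := htau.map' (f := aeval _) hmu
  -- the degree map
  let Th : MvPolynomial (AuxLp s ρ D) B →ₐ[B] Polynomial (MvPolynomial (AuxLp s ρ D) B) :=
    aeval fun l => if l.1 = a l.1.1 then Polynomial.C (X l) * Polynomial.X else Polynomial.C (X l)
  have hTh : ∀ l, (Th (X l)).natDegree ≤ if l.1 = a l.1.1 then 1 else 0 := by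
    intro l
    simp only [Th, aeval_X]
    split_ifs
    · exact (Polynomial.natDegree_C_mul_le _ _).trans Polynomial.natDegree_X_le
    · simp
  have hTh2 : ∀ l, (Th (X l)).natDegree ≤ 1 := by
    intro l
    refine (hTh l).trans ?_
    split_ifs <;> simp
  have hTC : ∀ b, Th (C b) = Polynomial.C (C b) := by
    intro b
    exact Th.commutes b
  let w : LamIdx s ρ D → ℕ := fun x => if x.2.1 = 0 ∨ x = a x.1 then 1 else 0
  apply AlgebraicIndependent.of_comp
    (A' := Polynomial (MvPolynomial (AuxLp s ρ D) B))
    (Th.restrictScalars K)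
  apply aux_indep w
  · intro x
    by_cases h : x.2.1 = 0
    · have : w x = 1 := by simp [w, h]
      rw [this]
      simp only [Function.comp, auxTheta, h, AlgHom.restrictScalars_apply]
      simp only [ne_eq, not_true, dite_false, map_neg, map_sum, Polynomial.natDegree_neg]
      apply Polynomial.natDegree_sum_le_of_forall_le
      intro m _
      split_ifs
      · simp
      · rw [map_mul, hTC]
        exact (Polynomial.natDegree_C_mul_le _ _).trans (hTh2 _)
    · have hx : auxTheta e D x = X ⟨x, h⟩ := by simp [auxTheta, h]
      simp only [Function.comp, hx, w, h, false_or]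
      exact hTh _
  · convert hc using 1
    funext x
    by_cases h : x.2.1 = 0
    · have : w x = 1 := by simp [w, h]
      rw [this]
      simp only [Function.comp, auxTheta, h, AlgHom.restrictScalars_apply]
      simp only [ne_eq, not_true, dite_false, map_neg, map_sum, Polynomial.coeff_neg,
        Polynomial.finsetSum_coeff]
      rw [Finset.sum_eq_single (a x.1).2]
      · have : (⟨x.1, (a x.1).2⟩ : LamIdx s ρ D) = a x.1 := rfl
        simp [tau, h, ha, hTC, this, Th, a]
      · intro m _ hm
        split_ifs with h0
        · simp
        · rw [map_mul, hTC, Polynomial.coeff_C_mul, Polynomial.coeff_eq_zero_of_natDegree_lt,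
            mul_zero]
          refine (hTh _).trans_lt ?_
          rw [if_neg]
          · simp
          · intro h3
            apply hm
            exact eq_of_heq (Sigma.mk.inj h3).2
      · simp
    · have hx : auxTheta e D x = X ⟨x, h⟩ := by simp [auxTheta, h]
      simp only [Function.comp, hx, w, h, false_or, tau, Th]
      by_cases h2 : x = a x.1
      · simp [← h2, h]
      · simp [h2, h]

theorem aux_exists_j {K B : Type} [Field K] [CommRing B] [IsDomain B] [Algebra K B] {s : ℕ}
    (π : MvPolynomial (Fin s) K →ₐ[K] B) (hπ : Function.Surjective π) (d ρ : ℕ)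
    (htr : Algebra.trdeg K B = (d : Cardinal)) (h : ρ ≤ d) :
    ∃ j : Fin ρ → Fin s, AlgebraicIndependent K (fun i => π (X (j i))) := by
  have hadj : Algebra.adjoin K (Set.range fun i : Fin s => π (X i)) = ⊤ := by
    have h1 : (Set.range fun i : Fin s => π (X i)) = Set.image π (Set.range X) := by
      rw [← Set.range_comp]; rfl
    rw [h1, ← AlgHom.map_adjoin, MvPolynomial.adjoin_range_X, Algebra.map_top]
    exact (AlgHom.range_eq_top _).2 hπ
  have : Algebra.IsAlgebraic (Algebra.adjoin K (Set.range fun i : Fin s => π (X i))) B := by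
    refine ⟨fun x => ?_⟩
    exact isAlgebraic_algebraMap (⟨x, by rw [hadj]; trivial⟩ :
      Algebra.adjoin K (Set.range fun i : Fin s => π (X i)))
  obtain ⟨t, ht, hb⟩ := exists_isTranscendenceBasis_subset (R := K)
    (Set.range fun i : Fin s => π (X i))
  have hc := hb.cardinalMk_eq_trdeg
  rw [htr] at hc
  have : ((ρ : ℕ) : Cardinal) ≤ Cardinal.mk t := by rw [hc]; exact_mod_cast h
  rw [← Cardinal.mk_fin] at this
  obtain ⟨f⟩ := (Cardinal.le_def _ _).1 this
  choose j hj using fun i : Fin ρ => ht (f i).2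
  refine ⟨j, ?_⟩
  have := hb.1.comp f f.injective
  convert this using 1
  funext i
  exact hj i

/-- The ideal of the theorem. -/
abbrev auxP (K : Type) [Field K] (s ρ : ℕ) (D : Fin ρ → ℕ) (p : Ideal (MvPolynomial (Fin s) K)) :
    Ideal (MvPolynomial (Fin s) (MvPolynomial (LamIdx s ρ D) K)) :=
  Ideal.map (MvPolynomial.map (MvPolynomial.C : K →+* MvPolynomial (LamIdx s ρ D) K)) p ⊔
      Ideal.span (Set.range fun i : Fin ρ =>
        genPoly K s (D i) (fun mo => (⟨i, mo⟩ : LamIdx s ρ D)))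

/-- The parametrisation. -/
def auxPhi {K B : Type} [Field K] [CommRing B] [Algebra K B] {s ρ : ℕ}
    (π : MvPolynomial (Fin s) K →ₐ[K] B) (D : Fin ρ → ℕ) :
    MvPolynomial (Fin s) (MvPolynomial (LamIdx s ρ D) K) →+* MvPolynomial (AuxLp s ρ D) B :=
  eval₂Hom (aeval (R := K) (auxTheta (fun m => π (monomial m 1)) D)).toRingHom
    (fun j => C (π (X j)))

section
variable {K B : Type} [Field K] [CommRing B] [Algebra K B] {s ρ : ℕ}
    (π : MvPolynomial (Fin s) K →ₐ[K] B) (D : Fin ρ → ℕ)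

theorem auxPhi_C (g : MvPolynomial (LamIdx s ρ D) K) :
    auxPhi π D (C g) = aeval (R := K) (auxTheta (fun m => π (monomial m 1)) D) g := by
  simp [auxPhi]

theorem auxPhi_X (j : Fin s) : auxPhi π D (X j) = C (π (X j)) := by
  simp [auxPhi]

theorem auxPhi_map (f : MvPolynomial (Fin s) K) :
    auxPhi π D (MvPolynomial.map (C : K →+* MvPolynomial (LamIdx s ρ D) K) f) = C (π f) := by
  have : (auxPhi π D).comp (MvPolynomial.map (C : K →+* MvPolynomial (LamIdx s ρ D) K)) =
      (C : B →+* MvPolynomial (AuxLp s ρ D) B).comp π.toRingHom := by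
    apply MvPolynomial.ringHom_ext
    · intro r
      have h1 : π (C r) = algebraMap K B r := π.commutes r
      simp only [RingHom.comp_apply, map_C, auxPhi_C, aeval_C, AlgHom.toRingHom_eq_coe,
        RingHom.coe_coe, h1]
      exact MvPolynomial.algebraMap_apply r
    · intro i
      simp [auxPhi_X]
  exact congrArg (fun ff => ff f) this

theorem auxPhi_monomial (m : Fin s →₀ ℕ) (v : LamIdx s ρ D) :
    auxPhi π D (monomial m (X v)) =
      auxTheta (fun m => π (monomial m 1)) D v * C (π (monomial m 1)) := by
  have : (monomial m (X v) : MvPolynomial (Fin s) (MvPolynomial (LamIdx s ρ D) K)) =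
      C (X v) * MvPolynomial.map (C : K →+* MvPolynomial (LamIdx s ρ D) K) (monomial m 1) := by
    rw [map_monomial, C_mul_monomial, map_one, mul_one]
  rw [this, map_mul, auxPhi_C, auxPhi_map, aeval_X]

/-- Pairing as an element of the index type. -/
def auxMk (D : Fin ρ → ℕ) (i : Fin ρ) (m : MonLE s (D i)) : LamIdx s ρ D := ⟨i, m⟩

open Classical in
theorem auxTheta_zero (e : (Fin s →₀ ℕ) → B) (i : Fin ρ) (x : LamIdx s ρ D)
    (hx : x = auxMk D i (auxZero s (D i))) : auxTheta e D x =
    - ∑ m ∈ ((Finset.univ : Finset (MonLE s (D i))).erase (auxZero s (D i)) : Finset _),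
      C (e m.1) * auxTheta e D (auxMk D i m) := by
  classical
  subst hx
  rw [auxTheta, dif_neg (by simp [auxZero, auxMk])]
  congr 1
  change (∑ m : MonLE s (D i), if h : m.1 ≠ 0 then
      C (e m.1) * X (⟨auxMk D i m, h⟩ : AuxLp s ρ D) else 0) = _
  rw [← Finset.add_sum_erase _ _ (Finset.mem_univ (auxZero s (D i))),
    dif_neg (by simp [auxZero]), zero_add]
  refine Finset.sum_congr (by congr) fun m hm => ?_
  have hm0 : m.1 ≠ 0 := by
    intro h
    exact (Finset.mem_erase.1 hm).1 (Subtype.ext h)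
  rw [dif_pos hm0, auxTheta, dif_pos (show (auxMk D i m).2.1 ≠ 0 from hm0)]

theorem auxPhi_gen (i : Fin ρ) :
    auxPhi π D (genPoly K s (D i) (auxMk D i)) = 0 := by
  classical
  rw [genPoly, map_sum]
  simp only [auxPhi_monomial]
  rw [← Finset.add_sum_erase _ _ (Finset.mem_univ (auxZero s (D i))),
    auxTheta_zero D _ i _ rfl]
  have h1 : π (monomial (auxZero s (D i)).1 1) = 1 := by
    simp only [auxZero]
    exact map_one π
  rw [h1, map_one, mul_one, neg_add_eq_zero]
  refine Finset.sum_congr rfl fun m hm => ?_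
  rw [mul_comm]

theorem auxPhi_surj (hπ : Function.Surjective π) : Function.Surjective (auxPhi π D) := by
  intro x
  change x ∈ (auxPhi π D).range
  induction x using MvPolynomial.induction_on with
  | C a =>
    obtain ⟨f, rfl⟩ := hπ a
    exact ⟨_, auxPhi_map π D f⟩
  | add p q hp hq => exact add_mem hp hq
  | mul_X p n hp =>
    refine mul_mem hp ⟨C (X n.1), ?_⟩
    rw [auxPhi_C, aeval_X, auxTheta, dif_pos n.2]

theorem auxPhi_ker (hπ : Function.Surjective π) (p : Ideal (MvPolynomial (Fin s) K))
    (hp : RingHom.ker π = p) : RingHom.ker (auxPhi π D) = auxP K s ρ D p := by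
  classical
  apply le_antisymm
  · let q := Ideal.Quotient.mk (auxP K s ρ D p)
    let g0 : MvPolynomial (Fin s) K →+* _ :=
      q.comp (MvPolynomial.map (C : K →+* MvPolynomial (LamIdx s ρ D) K))
    have hg0 : RingHom.ker π.toRingHom ≤ RingHom.ker g0 := by
      intro f hf
      have hf2 : f ∈ p := by rw [← hp]; exact hf
      rw [RingHom.mem_ker]
      exact Ideal.Quotient.eq_zero_iff_mem.2
        (Ideal.mem_sup_left (Ideal.mem_map_of_mem _ hf2))
    let g1 : B →+* _ := RingHom.liftOfSurjective π.toRingHom hπ ⟨g0, hg0⟩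
    have hg1 : ∀ f, g1 (π f) = g0 f := fun f =>
      RingHom.liftOfRightInverse_comp_apply π.toRingHom _ _ ⟨g0, hg0⟩ f
    let inv : MvPolynomial (AuxLp s ρ D) B →+* _ := eval₂Hom g1 (fun l => q (C (X l.1)))
    have hinv : inv.comp (auxPhi π D) = q := by
      have hmon : ∀ (m : Fin s →₀ ℕ) (v : LamIdx s ρ D),
          g0 (monomial m 1) * q (C (X v)) = q (monomial m (X v)) := by
        intro m v
        simp only [g0, RingHom.comp_apply]
        rw [map_monomial, ← map_mul, mul_comm, C_mul_monomial, map_one, mul_one]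
      apply MvPolynomial.ringHom_ext
      · intro r
        rw [RingHom.comp_apply, auxPhi_C]
        have : (inv.comp (aeval (R := K)
            (auxTheta (fun m => π (monomial m 1)) D)).toRingHom) = q.comp C := by
          apply MvPolynomial.ringHom_ext
          · intro k
            have h1 : inv (C (π (C k))) = q (C (C k)) := by
              simp only [inv, eval₂Hom_C, hg1, g0, RingHom.comp_apply, map_C]
            have h2 : π (C k) = algebraMap K B k := π.commutes k
            refine Eq.trans ?_ h1
            simp only [RingHom.comp_apply, aeval_C, AlgHom.toRingHom_eq_coe,
              RingHom.coe_coe, h2]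
            exact congrArg inv (MvPolynomial.algebraMap_apply k)
          · rintro v
            simp only [RingHom.comp_apply, AlgHom.toRingHom_eq_coe, RingHom.coe_coe, aeval_X]
            by_cases hv : v.2.1 = 0
            · obtain ⟨i, m⟩ := v
              have hm : m = auxZero s (D i) := Subtype.ext hv
              subst hm
              have hgen : q (genPoly K s (D i) (auxMk D i)) = 0 :=
                Ideal.Quotient.eq_zero_iff_mem.2
                  (Ideal.mem_sup_right (Ideal.subset_span ⟨i, rfl⟩))
              rw [genPoly, map_sum,
                ← Finset.add_sum_erase _ _ (Finset.mem_univ (auxZero s (D i)))] at hgen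
              change inv (auxTheta (fun m => π (monomial m 1)) D (auxMk D i (auxZero s (D i)))) =
                q (monomial (auxZero s (D i)).1 (X (auxMk D i (auxZero s (D i)))))
              rw [auxTheta_zero D _ i _ rfl, map_neg, map_sum]
              rw [eq_comm, ← add_eq_zero_iff_eq_neg]
              rw [← hgen]
              congr 1
              refine Finset.sum_congr rfl fun m hm => ?_
              have hm0 : m.1 ≠ 0 := by
                intro h
                exact (Finset.mem_erase.1 hm).1 (Subtype.ext h)
              rw [← hmon, map_mul, auxTheta, dif_pos (show (auxMk D i m).2.1 ≠ 0 from hm0)]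
              simp only [inv, eval₂Hom_C, eval₂Hom_X', hg1]
            · rw [auxTheta, dif_pos hv]
              simp only [inv, eval₂Hom_X']
        exact congrArg (fun f => f r) this
      · intro i
        rw [RingHom.comp_apply, auxPhi_X]
        simp only [inv, eval₂Hom_C, hg1, g0, RingHom.comp_apply, map_X]
    intro x hx
    apply Ideal.Quotient.eq_zero_iff_mem.1
    change q x = 0
    rw [← hinv, RingHom.comp_apply, RingHom.mem_ker.1 hx, map_zero]
  · refine sup_le ?_ ?_
    · rw [Ideal.map_le_iff_le_comap]
      intro f hf
      rw [← hp] at hf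
      rw [Ideal.mem_comap, RingHom.mem_ker, auxPhi_map, RingHom.mem_ker.1 hf, map_zero]
    · rw [Ideal.span_le]
      rintro _ ⟨i, rfl⟩
      exact auxPhi_gen π D i

end

theorem aux_ext {K T Lam : Type} [Field K] [CommRing T] [IsDomain T] [Algebra K T] [Finite Lam]
    {s : ℕ} (θ : MvPolynomial Lam K →ₐ[K] T) (hθ : Function.Injective θ)
    (φ : MvPolynomial (Fin s) (MvPolynomial Lam K) →+* T) (hφ : Function.Surjective φ)
    (hφC : ∀ g, φ (C g) = θ g) (N : ℕ) (htr : Algebra.trdeg K T = (N : Cardinal)) :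
    ∃ n : ℕ, (Ideal.map (MvPolynomial.map (algebraMap (MvPolynomial Lam K)
        (RatFuncField K Lam))) (RingHom.ker φ)).IsPrime ∧
      ringKrullDim (MvPolynomial (Fin s) (RatFuncField K Lam) ⧸
        Ideal.map (MvPolynomial.map (algebraMap (MvPolynomial Lam K)
        (RatFuncField K Lam))) (RingHom.ker φ)) = (n : WithBot ℕ∞) ∧
      Nat.card Lam + n = N := by
  have hθ2 : Function.Injective ((algebraMap T (FractionRing T)).comp θ.toRingHom) :=
    (IsFractionRing.injective T (FractionRing T)).comp hθ
  let ι : RatFuncField K Lam →+* FractionRing T := IsFractionRing.lift hθ2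
  have hι : ∀ g, ι (algebraMap _ _ g) = algebraMap T (FractionRing T) (θ g) := fun g =>
    IsFractionRing.lift_algebraMap hθ2 g
  let _ : Algebra (RatFuncField K Lam) (FractionRing T) := ι.toAlgebra
  have hT : IsScalarTower K (RatFuncField K Lam) (FractionRing T) := by
    apply IsScalarTower.of_algebraMap_eq
    intro k
    rw [IsScalarTower.algebraMap_apply K (MvPolynomial Lam K) (RatFuncField K Lam)]
    refine Eq.trans ?_ (hι _).symm
    rw [AlgHom.commutes, ← IsScalarTower.algebraMap_apply]
  let ψ : MvPolynomial (Fin s) (RatFuncField K Lam) →ₐ[RatFuncField K Lam] FractionRing T :=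
    aeval fun j => algebraMap T (FractionRing T) (φ (X j))
  have hψ : ∀ x, ψ (MvPolynomial.map (algebraMap (MvPolynomial Lam K) (RatFuncField K Lam)) x) =
      algebraMap T (FractionRing T) (φ x) := by
    intro x
    have : ψ.toRingHom.comp (MvPolynomial.map
        (algebraMap (MvPolynomial Lam K) (RatFuncField K Lam))) =
        (algebraMap T (FractionRing T)).comp φ := by
      apply MvPolynomial.ringHom_ext
      · intro g
        simp only [RingHom.comp_apply, map_C, hφC]
        refine Eq.trans (ψ.commutes _) (hι g)
      · intro i
        simp [ψ]
    exact congrArg (fun f => f x) this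
  have hker : RingHom.ker ψ = Ideal.map (MvPolynomial.map (algebraMap (MvPolynomial Lam K)
        (RatFuncField K Lam))) (RingHom.ker φ) := by
    apply le_antisymm
    · intro x hx
      let _ : Algebra (MvPolynomial (Fin s) (MvPolynomial Lam K))
        (MvPolynomial (Fin s) (RatFuncField K Lam)) := MvPolynomial.algebraMvPolynomial
      have hloc := MvPolynomial.isLocalization (σ := Fin s) (nonZeroDivisors (MvPolynomial Lam K))
        (RatFuncField K Lam)
      obtain ⟨⟨a, b⟩, hab⟩ := IsLocalization.surj
        ((nonZeroDivisors (MvPolynomial Lam K)).map (C (σ := Fin s))) x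
      have hmap : ∀ y, algebraMap (MvPolynomial (Fin s) (MvPolynomial Lam K))
        (MvPolynomial (Fin s) (RatFuncField K Lam)) y =
        MvPolynomial.map (algebraMap (MvPolynomial Lam K) (RatFuncField K Lam)) y := fun y => rfl
      have hu := IsLocalization.map_units (MvPolynomial (Fin s) (RatFuncField K Lam)) b
      have ha : a ∈ RingHom.ker φ := by
        have h1 := congrArg ψ hab
        rw [map_mul, RingHom.mem_ker.1 hx, zero_mul] at h1
        rw [RingHom.mem_ker]
        apply IsFractionRing.injective T (FractionRing T)
        rw [← hψ, map_zero, h1]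
        rfl
      rw [← Ideal.mul_unit_mem_iff_mem _ hu, hab]
      exact Ideal.mem_map_of_mem _ ha
    · rw [Ideal.map_le_iff_le_comap]
      intro y hy
      rw [Ideal.mem_comap, RingHom.mem_ker, hψ, RingHom.mem_ker.1 hy, map_zero]
  rw [← hker]
  have hft : Algebra.FiniteType (RatFuncField K Lam) ψ.range :=
    Algebra.FiniteType.of_surjective ψ.rangeRestrict ψ.rangeRestrict_surjective
  obtain ⟨n, hn1, hn2⟩ := aux_dim_trdeg (RatFuncField K Lam) ψ.range
  refine ⟨n, RingHom.ker_isPrime _, ?_, ?_⟩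
  · rw [← hn1]
    exact ringKrullDim_eq_of_ringEquiv (Ideal.quotientKerEquivRange ψ).toRingEquiv
  · have halg : Algebra.IsAlgebraic ψ.range (FractionRing T) := by
      refine ⟨fun x => ?_⟩
      have hTa : ∀ t : T, IsAlgebraic ψ.range (algebraMap T (FractionRing T) t) := by
        intro t
        obtain ⟨y, rfl⟩ := hφ t
        exact isAlgebraic_algebraMap (⟨_, ⟨_, hψ y⟩⟩ : ψ.range)
      obtain ⟨a, b, hb, rfl⟩ := IsFractionRing.div_surjective (A := T) x
      rw [div_eq_mul_inv]
      exact (hTa a).mul (hTa b).inv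
    have f1 : FaithfulSMul (RatFuncField K Lam) ψ.range :=
      (faithfulSMul_iff_algebraMap_injective _ _).2 (algebraMap (RatFuncField K Lam) ψ.range).injective
    have f2 : FaithfulSMul (RatFuncField K Lam) (FractionRing T) :=
      (faithfulSMul_iff_algebraMap_injective _ _).2
        (algebraMap (RatFuncField K Lam) (FractionRing T)).injective
    have e1 := trdeg_add_eq (RatFuncField K Lam) ψ.range (A := FractionRing T)
    rw [trdeg_eq_zero (R := ψ.range) (A := FractionRing T), hn2, add_zero] at e1
    have e2 := trdeg_add_eq K (MvPolynomial Lam K) (A := RatFuncField K Lam)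
    have : Algebra.IsAlgebraic (MvPolynomial Lam K) (RatFuncField K Lam) :=
      IsLocalization.isAlgebraic _ (nonZeroDivisors (MvPolynomial Lam K))
    rw [trdeg_eq_zero (R := MvPolynomial Lam K) (A := RatFuncField K Lam), add_zero,
      MvPolynomial.trdeg_of_isDomain] at e2
    have e3 := trdeg_add_eq K T (A := FractionRing T)
    have : Algebra.IsAlgebraic T (FractionRing T) :=
      IsLocalization.isAlgebraic _ (nonZeroDivisors T)
    rw [trdeg_eq_zero (R := T) (A := FractionRing T), add_zero, htr] at e3
    have e4 := trdeg_add_eq K (RatFuncField K Lam) (A := FractionRing T)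
    rw [← e1, ← e2, ← e3, ← Nat.cast_card] at e4
    simp only [Cardinal.lift_id] at e4
    exact_mod_cast e4

theorem aux_main {K B : Type} [Field K] [CommRing B] [IsDomain B] [Algebra K B] {s ρ d : ℕ}
    (π : MvPolynomial (Fin s) K →ₐ[K] B) (hπ : Function.Surjective π)
    (p : Ideal (MvPolynomial (Fin s) K)) (hp : RingHom.ker π = p)
    (hd : ringKrullDim B = (d : WithBot ℕ∞)) (hρ : ρ ≤ d)
    (D : Fin ρ → ℕ) (hD : ∀ i, 1 ≤ D i) :
    (auxP K s ρ D p).IsPrime ∧ (∀ g, C g ∈ auxP K s ρ D p → g = 0) ∧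
    (Ideal.map (MvPolynomial.map (algebraMap (MvPolynomial (LamIdx s ρ D) K)
      (RatFuncField K (LamIdx s ρ D)))) (auxP K s ρ D p)).IsPrime ∧
    ringKrullDim (MvPolynomial (Fin s) (RatFuncField K (LamIdx s ρ D)) ⧸
      Ideal.map (MvPolynomial.map (algebraMap (MvPolynomial (LamIdx s ρ D) K)
      (RatFuncField K (LamIdx s ρ D)))) (auxP K s ρ D p)) = ((d - ρ : ℕ) : WithBot ℕ∞) := by
  have : Algebra.FiniteType K B := Algebra.FiniteType.of_surjective π hπ
  obtain ⟨d2, h1, h2⟩ := aux_dim_trdeg K B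
  have hdd : d2 = d := by
    rw [hd] at h1
    exact_mod_cast h1.symm
  subst hdd
  obtain ⟨j, hj⟩ := aux_exists_j π hπ d2 ρ h2 hρ
  have hind : AlgebraicIndependent K (auxTheta (fun m => π (monomial m 1)) D) :=
    auxTheta_indep (fun m => π (monomial m 1)) D hD j hj
  have htr : Algebra.trdeg K (MvPolynomial (AuxLp s ρ D) B) =
      ((d2 + Nat.card (AuxLp s ρ D) : ℕ) : Cardinal) := by
    rw [← trdeg_add_eq K B (A := MvPolynomial (AuxLp s ρ D) B), h2,
      MvPolynomial.trdeg_of_isDomain, ← Nat.cast_card]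
    simp
  obtain ⟨n, h3, h4, h5⟩ := aux_ext (aeval (R := K) (auxTheta (fun m => π (monomial m 1)) D))
    hind (auxPhi π D) (auxPhi_surj π D hπ) (auxPhi_C π D) _ htr
  rw [auxPhi_ker π D hπ p hp] at h3 h4
  refine ⟨?_, ?_, h3, ?_⟩
  · rw [← auxPhi_ker π D hπ p hp]
    exact RingHom.ker_isPrime _
  · intro g hg
    rw [← auxPhi_ker π D hπ p hp, RingHom.mem_ker, auxPhi_C] at hg
    exact hind (hg.trans (map_zero _).symm)
  · rw [h4]
    have h6 := Nat.card_congr (auxEquiv s ρ D)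
    rw [Nat.card_sum, Nat.card_fin] at h6
    have : n = d2 - ρ := by omega
    rw [this]

/-- If `p ⊆ K[Y]` is a non-maximal prime with `dim K[Y]/p = d > 0` and
`Q_{D_1},…,Q_{D_ρ}` (`0 < ρ ≤ d`, `D_i ≥ 1`) are generic polynomials in pairwise disjoint
parameter tuples, then `P_ρ = ⟨p, Q_{D_1},…,Q_{D_ρ}⟩ ⊆ K[ΛΛ,Y]` is prime,
`P_ρ ∩ K[ΛΛ] = 0`, and the extension of `P_ρ` to `K(ΛΛ)[Y]` is prime with quotient of
Krull dimension `d − ρ`. -/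
theorem stmt_8 (K : Type) [Field K] (s : ℕ)
    (p : Ideal (MvPolynomial (Fin s) K)) (hp : p.IsPrime) (hpmax : ¬ p.IsMaximal)
    (d : ℕ) (hd0 : 0 < d)
    (hd : ringKrullDim (MvPolynomial (Fin s) K ⧸ p) = (d : WithBot ℕ∞))
    (ρ : ℕ) (hρ0 : 0 < ρ) (hρd : ρ ≤ d) (D : Fin ρ → ℕ) (hD : ∀ i, 1 ≤ D i) :
    (Ideal.map (MvPolynomial.map (MvPolynomial.C : K →+* MvPolynomial (LamIdx s ρ D) K)) p ⊔
      Ideal.span (Set.range fun i : Fin ρ =>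
        genPoly K s (D i) (fun mo => (⟨i, mo⟩ : LamIdx s ρ D)))).IsPrime ∧
    (∀ g : MvPolynomial (LamIdx s ρ D) K,
      MvPolynomial.C g ∈
        Ideal.map (MvPolynomial.map (MvPolynomial.C : K →+* MvPolynomial (LamIdx s ρ D) K)) p ⊔
          Ideal.span (Set.range fun i : Fin ρ =>
            genPoly K s (D i) (fun mo => (⟨i, mo⟩ : LamIdx s ρ D))) → g = 0) ∧
    (Ideal.map
      (MvPolynomial.map (algebraMap (MvPolynomial (LamIdx s ρ D) K) (RatFuncField K (LamIdx s ρ D))))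
      (Ideal.map (MvPolynomial.map (MvPolynomial.C : K →+* MvPolynomial (LamIdx s ρ D) K)) p ⊔
        Ideal.span (Set.range fun i : Fin ρ =>
          genPoly K s (D i) (fun mo => (⟨i, mo⟩ : LamIdx s ρ D))))).IsPrime ∧
    ringKrullDim (MvPolynomial (Fin s) (RatFuncField K (LamIdx s ρ D)) ⧸
      Ideal.map
        (MvPolynomial.map (algebraMap (MvPolynomial (LamIdx s ρ D) K) (RatFuncField K (LamIdx s ρ D))))
        (Ideal.map (MvPolynomial.map (MvPolynomial.C : K →+* MvPolynomial (LamIdx s ρ D) K)) p ⊔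
          Ideal.span (Set.range fun i : Fin ρ =>
            genPoly K s (D i) (fun mo => (⟨i, mo⟩ : LamIdx s ρ D))))) =
      ((d - ρ : ℕ) : WithBot ℕ∞) := by
  have : IsDomain (MvPolynomial (Fin s) K ⧸ p) := Ideal.Quotient.isDomain p
  exact aux_main (Ideal.Quotient.mkₐ K p) (Ideal.Quotient.mkₐ_surjective K p) p
    (Ideal.Quotient.mkₐ_ker K p) hd hρd D hD
end
end

section
/- Let K be a field of characteristic 0 and p a prime ideal of K[Y] such that the Krull dimension of K[Y]/p equals d > 0. Fix an integer ρ with 0 < ρ ≤ d and integers D_1,…,D_ρ ≥ 1, and let Q_{D_1}(Λ_1,Y),…,Q_{D_ρ}(Λ_ρ,Y) be the generic polynomials of degrees D_1,…,D_ρ in pairwise disjoint parameter tuples. Then there exists a Hilbert subset H of K^{N_{D_1}+…+N_{D_ρ}} such that for every (λ_1,…,λ_ρ) ∈ H, the ideal ⟨p, Q_{D_1}(λ_1,Y),…,Q_{D_ρ}(λ_ρ,Y)⟩ of K[Y] is prime and K[Y] modulo this ideal has Krull dimension d − ρ. -/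
open MvPolynomial

noncomputable section

set_option linter.all false
open scoped TensorProduct

/-- Tor-vanishing `m ⊗ M → M` injective, elementwise. -/
def TorV {R : Type} [CommRing R] (m : Ideal R) (M : Type) [AddCommGroup M] [Module R M] : Prop :=
  Function.Injective (LinearMap.rTensor M m.subtype)

theorem TorV.iff {R : Type} [CommRing R] (m : Ideal R) (M : Type) [AddCommGroup M] [Module R M] :
    TorV m M ↔ ∀ x : m ⊗[R] M, TensorProduct.lift ((LinearMap.lsmul R M).comp m.subtype) x = 0 → x = 0 := by
  unfold TorV
  rw [injective_iff_map_eq_zero]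
  have : TensorProduct.lift ((LinearMap.lsmul R M).comp m.subtype)
      = (TensorProduct.lid R M).toLinearMap ∘ₗ (LinearMap.rTensor M m.subtype) := by
    ext; simp
  rw [this]
  simp

theorem TorV.natural {R : Type} [CommRing R] (m : Ideal R) {M N : Type} [AddCommGroup M] [Module R M]
    [AddCommGroup N] [Module R N] (f : M →ₗ[R] N) (x : m ⊗[R] M) :
    TensorProduct.lift ((LinearMap.lsmul R N).comp m.subtype) (LinearMap.lTensor m f x)
     = f (TensorProduct.lift ((LinearMap.lsmul R M).comp m.subtype) x) := by
  induction x with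
  | zero => simp
  | tmul a b => simp
  | add a b ha hb => simp [ha, hb]

theorem TorV.of_exact {R : Type} [CommRing R] (m : Ideal R) {M N P : Type} [AddCommGroup M] [Module R M]
    [AddCommGroup N] [Module R N] [AddCommGroup P] [Module R P] (f : M →ₗ[R] N) (g : N →ₗ[R] P)
    (hf : Function.Injective f) (hg : Function.Surjective g) (h : Function.Exact f g)
    (hM : TorV m M) (hP : TorV m P) : TorV m N := by
  rw [TorV.iff] at *
  intro x hx
  have h1 := lTensor_exact m h hg
  have h2 : LinearMap.lTensor m g x = 0 := hP _ (by rw [TorV.natural, hx, map_zero])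
  obtain ⟨y, rfl⟩ := (h1 x).1 h2
  rw [TorV.natural] at hx
  rw [hM y (hf (by simpa using hx)), map_zero]

theorem TorV.equiv {R : Type} [CommRing R] (m : Ideal R) {M N : Type} [AddCommGroup M] [Module R M]
    [AddCommGroup N] [Module R N] (f : M ≃ₗ[R] N) (hM : TorV m M) : TorV m N := by
  rw [TorV.iff] at *
  intro x hx
  have := hM (LinearMap.lTensor m f.symm.toLinearMap x) (by rw [TorV.natural, hx, map_zero])
  have h2 : LinearMap.lTensor m f.toLinearMap (LinearMap.lTensor m f.symm.toLinearMap x) = x := by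
    rw [← LinearMap.comp_apply, ← LinearMap.lTensor_comp]; simp
  rw [← h2, this, map_zero]

theorem TorV.of_iUnion {R : Type} [CommRing R] (m : Ideal R) {M : Type} [AddCommGroup M] [Module R M]
    (N : ℕ → Submodule R M) (hmono : Monotone N) (hU : ∀ x, ∃ k, x ∈ N k)
    (h : ∀ k, TorV m (N k)) : TorV m M := by
  rw [TorV.iff]
  intro x hx
  have : ∃ k, ∃ y : m ⊗[R] (N k), LinearMap.lTensor m (N k).subtype y = x := by
    clear hx
    induction x with
    | zero => exact ⟨0, 0, by simp⟩
    | tmul a b =>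
      obtain ⟨k, hk⟩ := hU b
      exact ⟨k, a ⊗ₜ ⟨b, hk⟩, by simp⟩
    | add a b ha hb =>
      obtain ⟨k, y, rfl⟩ := ha
      obtain ⟨l, z, rfl⟩ := hb
      refine ⟨max k l, LinearMap.lTensor m (Submodule.inclusion (hmono (le_max_left k l))) y
        + LinearMap.lTensor m (Submodule.inclusion (hmono (le_max_right k l))) z, ?_⟩
      rw [map_add]
      congr 1 <;> · rw [← LinearMap.comp_apply, ← LinearMap.lTensor_comp]; rfl
  obtain ⟨k, y, rfl⟩ := this
  rw [TorV.natural] at hx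
  rw [(TorV.iff _ _).1 (h k) y (Subtype.ext (by simpa using hx)), map_zero]

theorem TorV.of_kill {R : Type} [CommRing R] (m : Ideal R) [m.IsMaximal] {M : Type} [AddCommGroup M] [Module R M]
    (f : R) (hf : f ∉ m) (h : ∀ x : M, f • x = 0) : TorV m M := by
  rw [TorV.iff]
  obtain ⟨u, r, hr, hur⟩ := Ideal.IsMaximal.exists_inv (I := m) inferInstance hf
  have key : ∀ x : m ⊗[R] M, x = (⟨r, hr⟩ : m) ⊗ₜ[R]
      (TensorProduct.lift ((LinearMap.lsmul R M).comp m.subtype) x) := by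
    intro x
    induction x with
    | zero => simp
    | tmul a b =>
      have h1 : b = r • b := by
        conv_lhs => rw [← one_smul R b, ← hur, add_smul, mul_smul, h, smul_zero, zero_add]
      simp only [TensorProduct.lift.tmul, LinearMap.comp_apply, Submodule.subtype_apply, LinearMap.lsmul_apply]
      conv_lhs => rw [h1]
      rw [TensorProduct.tmul_smul, TensorProduct.tmul_smul, TensorProduct.smul_tmul', TensorProduct.smul_tmul']
      congr 1
      ext; simp [mul_comm]
    | add a b ha hb => rw [map_add, TensorProduct.tmul_add, ← ha, ← hb]
  intro x hx
  rw [key x, hx, TensorProduct.tmul_zero]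

/-- generic vanishing property for the module category of `B` -/
def GF (R : Type) [CommRing R] (B : Type) [CommRing B] [Algebra R B] : Prop :=
  ∀ (M : Type) [AddCommGroup M] [Module R M] [Module B M] [IsScalarTower R B M] [Module.Finite B M],
    ∃ f : R, f ≠ 0 ∧ ∀ m : Ideal R, m.IsMaximal → f ∉ m → TorV m M

theorem GF.base (R : Type) [CommRing R] [IsDomain R] [IsNoetherianRing R] : GF R R := by
  intro M _ i1 i2 _ _
  have : i1 = i2 := by
    ext r x
    have := @IsScalarTower.smul_assoc R R M _ (i2.toSMul) (i1.toSMul) _ r 1 x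
    rw [smul_eq_mul, mul_one, one_smul] at this
    first | exact this | exact this.symm
  subst this
  have hfin : Module.Finite R M := inferInstance
  clear * - hfin
  induction hfin using IsNoetherianRing.induction_on_isQuotientEquivQuotientPrime R with
  | subsingleton N => 
    refine ⟨1, one_ne_zero, fun m hm _ => ?_⟩
    rw [TorV.iff]
    intro x _
    exact Subsingleton.elim _ _
  | quotient N p e => 
    by_cases hp : p.1 = ⊥
    · refine ⟨1, one_ne_zero, fun m hm _ => ?_⟩
      have : Module.Free R N := Module.Free.of_equiv ((e.trans (Submodule.quotEquivOfEqBot _ hp)).symm)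
      exact Module.Flat.rTensor_preserves_injective_linearMap _ m.injective_subtype
    · obtain ⟨f, hf, hf0⟩ := Submodule.exists_mem_ne_zero_of_ne_bot hp
      refine ⟨f, hf0, fun m hm hfm => TorV.of_kill m f hfm fun x => ?_⟩
      apply e.injective
      rw [map_smul, map_zero]
      obtain ⟨y, hy⟩ := Ideal.Quotient.mk_surjective (e x)
      rw [← hy, Algebra.smul_def, Ideal.Quotient.algebraMap_eq, ← map_mul, Ideal.Quotient.eq_zero_iff_mem]
      exact Ideal.mul_mem_right _ _ hf
  | exact N₁ N₂ N₃ f g hf hg hfg h₁ h₃ =>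
    obtain ⟨a, ha, h1⟩ := h₁
    obtain ⟨b, hb, h3⟩ := h₃
    refine ⟨a * b, mul_ne_zero ha hb, fun m hm hab => TorV.of_exact m f g hf hg hfg (h1 m hm ?_) (h3 m hm ?_)⟩
    · exact fun h => hab (Ideal.mul_mem_right _ _ h)
    · exact fun h => hab (Ideal.mul_mem_left _ _ h)

theorem GF.surj {R : Type} [CommRing R] {B C : Type} [CommRing B] [Algebra R B] [CommRing C] [Algebra R C]
    (φ : B →ₐ[R] C) (hφ : Function.Surjective φ) (h : GF R B) : GF R C := by
  intro M _ _ _ _ _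
  letI : Module B M := Module.compHom M φ.toRingHom
  letI : Algebra B C := φ.toRingHom.toAlgebra
  have hs : IsScalarTower B C M := ⟨fun b c x => by
    change (φ b * c) • x = φ b • c • x
    rw [mul_smul]⟩
  have : IsScalarTower R B M := ⟨fun r b x => by
    change (φ (r • b)) • x = r • (φ b • x)
    rw [map_smul, smul_assoc]⟩
  have : Module.Finite B C := Module.Finite.of_surjective (Algebra.linearMap B C) hφ
  have : Module.Finite B M := Module.Finite.trans C M
  exact h M


theorem GF.poly {R : Type} [CommRing R] [IsDomain R] {B : Type} [CommRing B] [IsNoetherianRing B] [Algebra R B]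
    (h : GF R B) : GF R (Polynomial B) := by
  intro M _ _ _ _ _
  letI : Module B M := Module.compHom M (Polynomial.C : B →+* Polynomial B)
  have hBX : ∀ (b : B) (x : M), b • x = (Polynomial.C b : Polynomial B) • x := fun _ _ => rfl
  have hs : IsScalarTower B (Polynomial B) M := ⟨fun b c x => by
    rw [hBX, ← mul_smul, Polynomial.smul_eq_C_mul]⟩
  have : IsScalarTower R B M := ⟨fun r b x => by
    rw [hBX, hBX, ← smul_assoc, Polynomial.smul_C]⟩
  obtain ⟨T, hT⟩ : ∃ T : M →ₗ[B] M, ∀ x, T x = (Polynomial.X : Polynomial B) • x :=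
    ⟨(LinearMap.lsmul (Polynomial B) M Polynomial.X).restrictScalars B, fun _ => rfl⟩
  obtain ⟨G, hG⟩ := (Module.Finite.fg_top : (⊤ : Submodule (Polynomial B) M).FG)
  let W : Submodule B M := Submodule.span B (G : Set M)
  have hWfg : Module.Finite B W := Module.Finite.span_finset B G
  obtain ⟨N, N0, Ns⟩ : ∃ N : ℕ → Submodule B M, N 0 = W ∧ ∀ k, N (k + 1) = W ⊔ (N k).map T :=
    ⟨fun k => Nat.rec W (fun _ P => W ⊔ P.map T) k, rfl, fun _ => rfl⟩
  have Ns' : ∀ k, N (k + 1) = N k ⊔ W.map (T ^ (k + 1)) := by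
    intro k
    induction k with
    | zero => rw [Ns, N0, pow_one]
    | succ k ih =>
      have h1 : (W.map (T ^ (k + 1))).map T = W.map (T ^ (k + 2)) := by
        ext x
        simp only [Submodule.mem_map, exists_exists_and_eq_and, pow_succ' T (k + 1), Module.End.mul_apply]
      calc N (k + 1 + 1) = W ⊔ (N (k + 1)).map T := Ns _
        _ = W ⊔ (N k ⊔ W.map (T ^ (k + 1))).map T := by rw [← ih]
        _ = (W ⊔ (N k).map T) ⊔ W.map (T ^ (k + 2)) := by rw [Submodule.map_sup, h1, sup_assoc]
        _ = N (k + 1) ⊔ W.map (T ^ (k + 2)) := by rw [← Ns]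
  have hmono : Monotone N := monotone_nat_of_le_succ fun k => by rw [Ns']; exact le_sup_left
  have hTN : ∀ k x, x ∈ N k → T x ∈ N (k + 1) := fun k x hx => by
    rw [Ns]; exact Submodule.mem_sup_right (Submodule.mem_map_of_mem hx)
  have hU : ∀ x, ∃ k, x ∈ N k := by
    have hdir : Directed (· ≤ ·) N := hmono.directed_le
    let U : Submodule (Polynomial B) M :=
      { carrier := {x | ∃ k, x ∈ N k}
        add_mem' := by
          rintro a b ⟨k, hk⟩ ⟨l, hl⟩
          exact ⟨max k l, add_mem (hmono (le_max_left _ _) hk) (hmono (le_max_right _ _) hl)⟩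
        zero_mem' := ⟨0, zero_mem _⟩
        smul_mem' := by
          intro c x hx
          induction c using Polynomial.induction_on' with
          | add p q hp hq =>
            obtain ⟨k, hk⟩ := hp
            obtain ⟨l, hl⟩ := hq
            rw [add_smul]
            exact ⟨max k l, add_mem (hmono (le_max_left _ _) hk) (hmono (le_max_right _ _) hl)⟩
          | monomial n b =>
            induction n with
            | zero =>
              obtain ⟨k, hk⟩ := hx
              exact ⟨k, (N k).smul_mem b hk⟩
            | succ n ih =>
              obtain ⟨k, hk⟩ := ih
              refine ⟨k + 1, ?_⟩
              have := hTN k _ hk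
              rw [hT, ← mul_smul, Polynomial.X_mul_monomial] at this
              exact this }
    have : U = ⊤ := by
      rw [eq_top_iff, ← hG, Submodule.span_le]
      intro x hx
      exact ⟨0, N0 ▸ Submodule.subset_span hx⟩
    intro x
    have hx : x ∈ U := by rw [this]; trivial
    exact hx
  let Kk : ℕ →o Submodule B W :=
    { toFun := fun k => (N k).comap ((T ^ (k + 1)) ∘ₗ W.subtype)
      monotone' := monotone_nat_of_le_succ fun k x hx => by
        rw [Submodule.mem_comap] at hx ⊢
        have := hTN k _ hx
        rw [pow_succ']
        exact this }
  obtain ⟨n, hn⟩ := monotone_stabilizes_iff_noetherian.2 (inferInstance : IsNoetherian B W) Kk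
  obtain ⟨f0, hf0, hf0'⟩ := h W
  choose F hF hF' using fun k => h (W ⧸ Kk k)
  refine ⟨f0 * ∏ k ∈ Finset.range (n + 1), F k, mul_ne_zero hf0 (Finset.prod_ne_zero_iff.2 fun k _ => hF k), ?_⟩
  intro m hm hfm
  have hW : TorV m W := hf0' m hm fun h => hfm (Ideal.mul_mem_right _ _ h)
  have hK : ∀ k, k ≤ n → TorV m (W ⧸ Kk k) := fun k hk => hF' k m hm fun h => hfm
    (Ideal.mul_mem_left _ _ (Ideal.mem_of_dvd _ (Finset.dvd_prod_of_mem F (Finset.mem_range.2 (Nat.lt_succ_of_le hk))) h))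
  have hK' : ∀ k, TorV m (W ⧸ Kk k) := fun k => by
    rcases le_total k n with hk | hk
    · exact hK k hk
    · have := hn k hk
      rw [← this]
      exact hK n le_rfl
  have hN : ∀ k, TorV m ↥(N k) := by
    intro k
    induction k with
    | zero => rw [N0]; exact hW
    | succ k ih =>
      let P : Submodule B (N (k + 1)) := (N k).submoduleOf (N (k + 1))
      have hle : N k ≤ N (k + 1) := hmono (Nat.le_succ k)
      have hmem : ∀ x : W, ((T ^ (k + 1)) ∘ₗ W.subtype) x ∈ N (k + 1) := fun x => by
        rw [Ns']; exact Submodule.mem_sup_right (Submodule.mem_map_of_mem x.2)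
      let φ : W →ₗ[B] (N (k + 1) ⧸ P) := P.mkQ ∘ₗ LinearMap.codRestrict (N (k + 1)) ((T ^ (k + 1)) ∘ₗ W.subtype) hmem
      have hker : LinearMap.ker φ = Kk k := by
        ext x
        simp only [φ, LinearMap.mem_ker, LinearMap.comp_apply, Submodule.mkQ_apply, Submodule.Quotient.mk_eq_zero]
        rfl
      have hsurj : Function.Surjective φ := by
        intro y
        obtain ⟨⟨y, hy⟩, rfl⟩ := P.mkQ_surjective y
        have hy' := hy
        rw [Ns', Submodule.mem_sup] at hy'
        obtain ⟨a, ha, b, ⟨w, hw, rfl⟩, rfl⟩ := hy'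
        refine ⟨⟨w, hw⟩, ?_⟩
        simp only [φ, LinearMap.comp_apply]
        rw [← sub_eq_zero, ← map_sub, Submodule.mkQ_apply, Submodule.Quotient.mk_eq_zero]
        change _ ∈ N k
        simpa using ha
      let e : (W ⧸ Kk k) ≃ₗ[B] (N (k + 1) ⧸ P) :=
        (Submodule.quotEquivOfEq _ _ hker.symm).trans (φ.quotKerEquivOfSurjective hsurj)
      refine TorV.of_exact m ((Submodule.inclusion hle).restrictScalars R) (P.mkQ.restrictScalars R)
        (Submodule.inclusion_injective hle) P.mkQ_surjective ?_ ih (TorV.equiv m (e.restrictScalars R) (hK' k))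
      intro x
      simp only [LinearMap.restrictScalars_apply, Submodule.mkQ_apply, Submodule.Quotient.mk_eq_zero]
      constructor
      · intro hx
        exact ⟨⟨x.1, hx⟩, rfl⟩
      · rintro ⟨y, rfl⟩
        exact y.2
  exact TorV.of_iUnion m (fun k => (N k).restrictScalars R) (fun a b hab => hmono hab) hU hN

theorem GF.mvPoly (R : Type) [CommRing R] [IsDomain R] [IsNoetherianRing R] (n : ℕ) :
    GF R (MvPolynomial (Fin n) R) := by
  induction n with
  | zero =>
    exact (GF.base R).surj (MvPolynomial.isEmptyAlgEquiv R (Fin 0)).symm.toAlgHom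
      (MvPolynomial.isEmptyAlgEquiv R (Fin 0)).symm.surjective
  | succ n ih =>
    exact (GF.poly ih).surj (MvPolynomial.finSuccEquiv R n).symm.toAlgHom
      (MvPolynomial.finSuccEquiv R n).symm.surjective

theorem GF.finiteType (R : Type) [CommRing R] [IsDomain R] [IsNoetherianRing R] (A : Type) [CommRing A]
    [Algebra R A] [hA : Algebra.FiniteType R A] : GF R A := by
  obtain ⟨n, f, hf⟩ := Algebra.FiniteType.iff_quotient_mvPolynomial''.mp hA
  exact (GF.mvPoly R n).surj f hf

/-- generic non-zero-divisor -/
theorem generic_nzd (R : Type) [CommRing R] [IsDomain R] [IsNoetherianRing R] (A : Type) [CommRing A]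
    [IsDomain A] [Algebra R A] [hA : Algebra.FiniteType R A] (g : A) (hg : g ≠ 0) :
    ∃ f : R, f ≠ 0 ∧ ∀ m : Ideal R, m.IsMaximal → f ∉ m →
      ∀ a : A, g * a ∈ m.map (algebraMap R A) → a ∈ m.map (algebraMap R A) := by
  obtain ⟨f, hf, hf'⟩ := GF.finiteType R A (A ⧸ Ideal.span {g})
  refine ⟨f, hf, fun m hm hfm a ha => ?_⟩
  have ht := (TorV.iff _ _).1 (hf' m hm hfm)
  have himg : ∀ b : A, b ∈ m.map (algebraMap R A) ↔
      ∃ x : m ⊗[R] A, TensorProduct.lift ((LinearMap.lsmul R A).comp m.subtype) x = b := by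
    intro b
    constructor
    · intro hb
      induction hb using Submodule.span_induction with
      | mem x hx =>
        obtain ⟨r, hr, rfl⟩ := hx
        exact ⟨⟨r, hr⟩ ⊗ₜ 1, by simp [Algebra.smul_def]⟩
      | zero => exact ⟨0, map_zero _⟩
      | add x y _ _ hx hy =>
        obtain ⟨x, rfl⟩ := hx
        obtain ⟨y, rfl⟩ := hy
        exact ⟨x + y, map_add _ _ _⟩
      | smul c x _ hx =>
        obtain ⟨x, rfl⟩ := hx
        exact ⟨LinearMap.lTensor m (LinearMap.mulLeft R c) x, by rw [TorV.natural]; simp⟩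
    · rintro ⟨x, rfl⟩
      induction x with
      | zero => simp
      | tmul r b =>
        simp only [TensorProduct.lift.tmul, LinearMap.comp_apply, Submodule.subtype_apply, LinearMap.lsmul_apply,
          Algebra.smul_def]
        exact Ideal.mul_mem_right _ _ (Ideal.mem_map_of_mem _ r.2)
      | add x y hx hy => rw [map_add]; exact add_mem hx hy
  obtain ⟨ξ, hξ⟩ := (himg _).1 ha
  let π : A →ₗ[R] (A ⧸ Ideal.span {g}) := (Ideal.Quotient.mkₐ R (Ideal.span {g})).toLinearMap
  have hex : Function.Exact (LinearMap.mulLeft R g) π := by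
    intro x
    change Ideal.Quotient.mk _ x = 0 ↔ _
    rw [Ideal.Quotient.eq_zero_iff_mem, Ideal.mem_span_singleton]
    constructor
    · rintro ⟨c, rfl⟩; exact ⟨c, rfl⟩
    · rintro ⟨c, rfl⟩; exact ⟨c, rfl⟩
  have h0 : LinearMap.lTensor m π ξ = 0 := by
    apply ht
    rw [TorV.natural, hξ]
    exact (hex _).2 ⟨a, rfl⟩
  obtain ⟨y, rfl⟩ := (lTensor_exact m hex Ideal.Quotient.mk_surjective ξ).1 h0
  rw [TorV.natural] at hξ
  rw [himg]
  exact ⟨y, mul_left_cancel₀ hg hξ⟩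


theorem fibre_core {K R A : Type} [Field K] [CommRing R] [CommRing A] [Algebra R A]
    (φ : R →+* K) (hφ : Function.Surjective φ) (e : ℕ) (z : Fin e → A) (θ : A)
    (P : Polynomial (MvPolynomial (Fin e) R)) (g : MvPolynomial (Fin e) R)
    (ev : Polynomial (MvPolynomial (Fin e) R) →+* A)
    (hev : ev = Polynomial.eval₂RingHom (MvPolynomial.aeval z : MvPolynomial (Fin e) R →ₐ[R] A).toRingHom θ)
    (hker : ∀ c, ev c = 0 → P ∣ c) (hP0 : ev P = 0)
    (hg : ∀ a : A, ∃ (N : ℕ) (c : Polynomial (MvPolynomial (Fin e) R)), (MvPolynomial.aeval z g) ^ N * a = ev c)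
    (hPm : P.Monic) (hPirr : Prime (P.map (MvPolynomial.map φ)))
    (hgt : MvPolynomial.map φ g ≠ 0)
    (hnzd : ∀ a : A, MvPolynomial.aeval z g * a ∈ (RingHom.ker φ).map (algebraMap R A) →
      a ∈ (RingHom.ker φ).map (algebraMap R A)) :
    ((RingHom.ker φ).map (algebraMap R A)).IsPrime ∧
    (∀ s : MvPolynomial (Fin e) R, MvPolynomial.aeval z s ∈ (RingHom.ker φ).map (algebraMap R A) →
      MvPolynomial.map φ s = 0) := by
  set I := (RingHom.ker φ).map (algebraMap R A) with hI
  obtain ⟨red, hred⟩ : ∃ red : Polynomial (MvPolynomial (Fin e) R) →+* Polynomial (MvPolynomial (Fin e) K),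
      red = Polynomial.mapRingHom (MvPolynomial.map φ) := ⟨_, rfl⟩
  have hred' : ∀ c, red c = c.map (MvPolynomial.map φ) := fun c => by rw [hred]; rfl
  have hredsurj : Function.Surjective red := by
    rw [hred]; exact Polynomial.map_surjective _ (MvPolynomial.map_surjective φ hφ)
  have hevC : ∀ s, ev (Polynomial.C s) = MvPolynomial.aeval z s := fun s => by rw [hev]; simp
  rw [← hred'] at hPirr
  have hnzd' : ∀ (N : ℕ) (a : A), (MvPolynomial.aeval z g) ^ N * a ∈ I → a ∈ I := by
    intro N
    induction N with
    | zero => intro a ha; simpa using ha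
    | succ N ih => intro a ha; rw [pow_succ, mul_assoc] at ha; exact hnzd _ (ih _ ha)
  have hS0 : ∀ s : MvPolynomial (Fin e) R, MvPolynomial.map φ s = 0 → MvPolynomial.aeval z s ∈ I := by
    intro s hs
    rw [MvPolynomial.aeval_def, MvPolynomial.eval₂_eq]
    refine sum_mem fun d _ => Ideal.mul_mem_right _ _ (Ideal.mem_map_of_mem _ ?_)
    rw [RingHom.mem_ker, ← MvPolynomial.coeff_map, hs, MvPolynomial.coeff_zero]
  have hred0 : ∀ c, red c = 0 → ev c ∈ I := by
    intro c hc
    rw [hev, Polynomial.coe_eval₂RingHom, Polynomial.eval₂_eq_sum_range]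
    refine sum_mem fun i _ => Ideal.mul_mem_right _ _ (hS0 _ ?_)
    rw [← Polynomial.coeff_map, ← hred', hc, Polynomial.coeff_zero]
  have hlift : ∀ a ∈ I, ∃ (N : ℕ) (c : Polynomial (MvPolynomial (Fin e) R)),
      (MvPolynomial.aeval z g) ^ N * a = ev c ∧ red c = 0 := by
    intro a ha
    induction ha using Submodule.span_induction with
    | mem x hx =>
      obtain ⟨r, hr, rfl⟩ := hx
      refine ⟨0, Polynomial.C (MvPolynomial.C r), by rw [hevC]; simp, ?_⟩
      have hr' : φ r = 0 := hr
      rw [hred']; simp [hr']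
    | zero => exact ⟨0, 0, by simp, by simp⟩
    | add x y _ _ hx hy =>
      obtain ⟨N, c, h1, h2⟩ := hx
      obtain ⟨M, d, h3, h4⟩ := hy
      refine ⟨N + M, Polynomial.C g ^ M * c + Polynomial.C g ^ N * d, ?_, by simp [h2, h4]⟩
      rw [map_add, map_mul, map_mul, map_pow, map_pow, hevC, ← h1, ← h3]; ring
    | smul b x _ hx =>
      obtain ⟨N, c, h1, h2⟩ := hx
      obtain ⟨M, d, h3⟩ := hg b
      refine ⟨M + N, d * c, ?_, by simp [h2]⟩
      rw [map_mul, ← h1, ← h3, smul_eq_mul]; ring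
  have hconst : ∀ s : MvPolynomial (Fin e) K, red P ∣ Polynomial.C s → s = 0 := by
    intro s hs
    by_contra h0
    have hm : (red P).Monic := by rw [hred']; exact hPm.map _
    have h1 := Polynomial.natDegree_le_of_dvd hs (by simpa using h0)
    rw [Polynomial.natDegree_C, Nat.le_zero] at h1
    rw [hm.natDegree_eq_zero.1 h1] at hPirr
    exact hPirr.not_unit isUnit_one
  have claim : ∀ c, ev c ∈ I → red P ∣ red c := by
    intro c hc
    obtain ⟨N, d, h1, h2⟩ := hlift _ hc
    have h3 : P ∣ Polynomial.C g ^ N * c - d := hker _ (by rw [map_sub, map_mul, map_pow, hevC, h1, sub_self])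
    have h4 := map_dvd red h3
    rw [map_sub, h2, sub_zero, map_mul, map_pow] at h4
    rcases hPirr.dvd_or_dvd h4 with h | h
    · exfalso
      have := hPirr.dvd_of_dvd_pow h
      rw [hred' (Polynomial.C g), Polynomial.map_C] at this
      exact hgt (hconst _ this)
    · exact h
  have back : ∀ c, red P ∣ red c → ev c ∈ I := by
    rintro c ⟨d, hd⟩
    obtain ⟨d, rfl⟩ := hredsurj d
    have := hred0 (c - P * d) (by rw [map_sub, hd, map_mul, sub_self])
    rwa [map_sub, map_mul, hP0, zero_mul, sub_zero] at this
  refine ⟨⟨?_, ?_⟩, ?_⟩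
  · intro htop
    have := claim 1 (by rw [htop]; trivial)
    rw [map_one] at this
    exact hPirr.not_unit (isUnit_of_dvd_one this)
  · intro x y hxy
    obtain ⟨N, c, hc⟩ := hg x
    obtain ⟨M, d, hd⟩ := hg y
    have h1 : ev (c * d) ∈ I := by
      rw [map_mul, ← hc, ← hd, mul_mul_mul_comm]
      exact Ideal.mul_mem_left _ _ hxy
    have h2 := claim _ h1
    rw [map_mul] at h2
    rcases hPirr.dvd_or_dvd h2 with h | h
    · left; apply hnzd' N; rw [hc]; exact back _ h
    · right; apply hnzd' M; rw [hd]; exact back _ h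
  · intro s hs
    rw [← hevC] at hs
    have := claim _ hs
    rw [hred' (Polynomial.C s), Polynomial.map_C] at this
    exact hconst _ this


theorem krullDim_integral {R S : Type} [CommRing R] [CommRing S] [IsDomain S] [Algebra R S]
    [Algebra.IsIntegral R S] (hinj : Function.Injective (algebraMap R S)) :
    ringKrullDim S = ringKrullDim R := by
  apply le_antisymm
  · refine Order.krullDim_le_of_strictMono (PrimeSpectrum.comap (algebraMap R S)) ?_
    intro I J h
    exact Ideal.IsIntegral.comap_lt_comap (R := R) (I := I.asIdeal) (J := J.asIdeal) h
  · refine iSup_le fun l => ?_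
    obtain ⟨Q, hQ, hQ2⟩ := Ideal.exists_ideal_over_prime_of_isIntegral_of_isDomain (S := S)
      (RelSeries.head l).asIdeal (by
        rw [(RingHom.injective_iff_ker_eq_bot _).1 hinj]; exact bot_le)
    haveI : Q.LiesOver (RelSeries.head l).asIdeal := ⟨hQ2.symm⟩
    obtain ⟨L, hL, -, -⟩ := Ideal.exists_ltSeries_of_hasGoingUp l Q
    rw [← hL]
    exact Order.LTSeries.length_le_krullDim L

theorem dim_trdeg (K C : Type) [Field K] [CommRing C] [IsDomain C] [Algebra K C]
    [Algebra.FiniteType K C] : ∃ n : ℕ, ringKrullDim C = (n : WithBot ℕ∞) ∧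
      Algebra.trdeg K C = (n : Cardinal) := by
  obtain ⟨n, g, hg, hgi⟩ := exists_integral_inj_algHom_of_fg K C
  letI : Algebra (MvPolynomial (Fin n) K) C := g.toRingHom.toAlgebra
  haveI : IsScalarTower K (MvPolynomial (Fin n) K) C := IsScalarTower.of_algebraMap_eq fun x => (g.commutes x).symm
  haveI : Algebra.IsIntegral (MvPolynomial (Fin n) K) C := ⟨hgi⟩
  have hinj : Function.Injective (algebraMap (MvPolynomial (Fin n) K) C) := hg
  haveI : FaithfulSMul (MvPolynomial (Fin n) K) C := (faithfulSMul_iff_algebraMap_injective _ _).2 hinj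
  refine ⟨n, ?_, ?_⟩
  · rw [krullDim_integral hinj, MvPolynomial.ringKrullDim_of_isNoetherianRing, ringKrullDim_eq_zero_of_field]
    simp
  · rw [← trdeg_add_eq K (MvPolynomial (Fin n) K) (A := C), trdeg_eq_zero (R := MvPolynomial (Fin n) K) (A := C),
      MvPolynomial.trdeg_of_isDomain]
    simp

theorem dim_of_trdeg (K C : Type) [Field K] [CommRing C] [IsDomain C] [Algebra K C]
    [Algebra.FiniteType K C] (n : ℕ) (h : Algebra.trdeg K C = (n : Cardinal)) :
    ringKrullDim C = (n : WithBot ℕ∞) := by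
  obtain ⟨m, h1, h2⟩ := dim_trdeg K C
  rw [h] at h2
  have : n = m := by exact_mod_cast h2
  rw [this, h1]

theorem trdeg_of_dim (K C : Type) [Field K] [CommRing C] [IsDomain C] [Algebra K C]
    [Algebra.FiniteType K C] (n : ℕ) (h : ringKrullDim C = (n : WithBot ℕ∞)) :
    Algebra.trdeg K C = (n : Cardinal) := by
  obtain ⟨m, h1, h2⟩ := dim_trdeg K C
  rw [h] at h1
  have : n = m := by exact_mod_cast h1
  rw [this, h2]


theorem prim_data (S A : Type) [CommRing S] [IsDomain S] [IsIntegrallyClosed S] [CharZero S]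
    [CommRing A] [IsDomain A] [Algebra S A] (hinj : Function.Injective (algebraMap S A))
    [Algebra.FiniteType S A] [Algebra.IsAlgebraic S A] :
    ∃ (θ : A) (P : Polynomial S) (g : S), g ≠ 0 ∧ P.Monic ∧ Polynomial.aeval θ P = 0 ∧
      (∀ c : Polynomial S, Polynomial.aeval θ c = 0 → P ∣ c) ∧
      Irreducible (P.map (algebraMap S (FractionRing S))) ∧
      ∀ a : A, ∃ (N : ℕ) (c : Polynomial S), (algebraMap S A g) ^ N * a = Polynomial.aeval θ c := by
  haveI : FaithfulSMul S A := (faithfulSMul_iff_algebraMap_injective _ _).2 hinj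
  haveI : FaithfulSMul S (FractionRing A) := (faithfulSMul_iff_algebraMap_injective _ _).2 (by
    rw [IsScalarTower.algebraMap_eq S A (FractionRing A)]
    exact (IsFractionRing.injective A (FractionRing A)).comp hinj)
  letI : Algebra (FractionRing S) (FractionRing A) := FractionRing.liftAlgebra S (FractionRing A)
  haveI : IsScalarTower S (FractionRing S) (FractionRing A) := inferInstance
  haveI : Algebra.IsAlgebraic (FractionRing S) (FractionRing A) :=
    inferInstance
  have hAL : Function.Injective (algebraMap A (FractionRing A)) := IsFractionRing.injective A _
  obtain ⟨gens, hgens⟩ := (inferInstance : Algebra.FiniteType S A).1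
  have hfd : FiniteDimensional (FractionRing S) (FractionRing A) := by
    have h1 : IntermediateField.adjoin (FractionRing S) (algebraMap A (FractionRing A) '' (gens : Set A)) = ⊤ := by
      rw [eq_top_iff]
      intro x _
      have hA : ∀ a : A, algebraMap A (FractionRing A) a ∈
          IntermediateField.adjoin (FractionRing S) (algebraMap A (FractionRing A) '' (gens : Set A)) := by
        intro a
        have ha : a ∈ Algebra.adjoin S (gens : Set A) := by rw [hgens]; trivial
        induction ha using Algebra.adjoin_induction with
        | mem x hx => exact IntermediateField.subset_adjoin _ _ ⟨x, hx, rfl⟩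
        | algebraMap r =>
          rw [← IsScalarTower.algebraMap_apply S A (FractionRing A),
            IsScalarTower.algebraMap_apply S (FractionRing S) (FractionRing A)]
          exact IntermediateField.algebraMap_mem _ _
        | add x y _ _ hx hy => rw [map_add]; exact add_mem hx hy
        | mul x y _ _ hx hy => rw [map_mul]; exact mul_mem hx hy
      obtain ⟨a, b, hb, rfl⟩ := IsFractionRing.div_surjective A x
      exact div_mem (hA a) (hA b)
    have h2 := IntermediateField.finiteDimensional_adjoin (K := FractionRing S)
      (S := algebraMap A (FractionRing A) '' (gens : Set A))
      (fun x _ => Algebra.IsIntegral.isIntegral x)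
    rw [h1] at h2
    exact Module.Finite.equiv (IntermediateField.topEquiv (F := FractionRing S) (E := FractionRing A)).toLinearEquiv
  haveI : CharZero (FractionRing S) := inferInstance
  obtain ⟨θ0, hθ0⟩ := Field.exists_primitive_element (FractionRing S) (FractionRing A)
  -- scale into `A`
  obtain ⟨s, θ, hs0, hθint, hθ⟩ : ∃ (s : S) (θ : A), s ≠ 0 ∧ IsIntegral S θ ∧
      algebraMap A (FractionRing A) θ = algebraMap S (FractionRing A) s * θ0 := by
    obtain ⟨a, b, hb, hab⟩ := IsFractionRing.div_surjective A θ0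
    obtain ⟨r, hr0, w, hw⟩ := IsAlgebraic.exists_nonzero_dvd (Algebra.IsAlgebraic.isAlgebraic (R := S) b) hb
    obtain ⟨y, hy0, hy⟩ := IsAlgebraic.exists_integral_multiple (Algebra.IsAlgebraic.isAlgebraic (R := S) (w * a))
    refine ⟨y * r, y • (w * a), mul_ne_zero hy0 hr0, hy, ?_⟩
    have hb0 : algebraMap A (FractionRing A) b ≠ 0 :=
      (map_ne_zero_iff _ hAL).2 (nonZeroDivisors.ne_zero hb)
    rw [← hab, map_mul, Algebra.smul_def, IsScalarTower.algebraMap_apply S A (FractionRing A) r, hw,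
      IsScalarTower.algebraMap_apply S A (FractionRing A) y]
    simp only [map_mul]
    field_simp
  have hclear : ∀ x : A, ∃ (r : S) (c : Polynomial S), r ≠ 0 ∧ algebraMap S A r * x = Polynomial.aeval θ c := by
    intro x
    have hx : algebraMap A (FractionRing A) x ∈ Algebra.adjoin (FractionRing S) {algebraMap A (FractionRing A) θ} := by
      rw [← IntermediateField.adjoin_simple_toSubalgebra_of_isAlgebraic (Algebra.IsAlgebraic.isAlgebraic _)]
      have : IntermediateField.adjoin (FractionRing S) {algebraMap A (FractionRing A) θ} = ⊤ := by
        rw [eq_top_iff, ← hθ0, IntermediateField.adjoin_simple_le_iff]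
        have h3 : θ0 = algebraMap A (FractionRing A) θ / algebraMap (FractionRing S) (FractionRing A) (algebraMap S (FractionRing S) s) := by
          rw [hθ, ← IsScalarTower.algebraMap_apply, mul_div_cancel_left₀]
          exact (map_ne_zero_iff _ (FaithfulSMul.algebraMap_injective S (FractionRing A))).2 hs0
        rw [h3]
        exact div_mem (IntermediateField.mem_adjoin_simple_self _ _) (IntermediateField.algebraMap_mem _ _)
      rw [this]; trivial
    rw [Algebra.adjoin_singleton_eq_range_aeval] at hx
    obtain ⟨q, hq⟩ := hx
    obtain ⟨b, hb, hbq⟩ := IsLocalization.integerNormalization_spec (nonZeroDivisors S) q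
    refine ⟨b, IsLocalization.integerNormalization (nonZeroDivisors S) q, nonZeroDivisors.ne_zero hb, hAL ?_⟩
    rw [← Polynomial.aeval_algebraMap_apply, ← Polynomial.aeval_map_algebraMap (FractionRing S), hbq,
      map_mul, ← IsScalarTower.algebraMap_apply, ← hq]
    rw [← algebraMap_smul (FractionRing S) b q, map_smul, Algebra.smul_def,
      ← IsScalarTower.algebraMap_apply]
    rfl
  classical
  choose r c hr0 hrc using hclear
  refine ⟨θ, minpoly S θ, ∏ x ∈ gens, r x, Finset.prod_ne_zero_iff.2 fun x _ => hr0 x, minpoly.monic hθint,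
    minpoly.aeval S θ, fun c hc => minpoly.isIntegrallyClosed_dvd hθint hc,
    ((minpoly.monic hθint).irreducible_iff_irreducible_map_fraction_map).1 (minpoly.irreducible hθint), ?_⟩
  intro a
  have ha : a ∈ Algebra.adjoin S (gens : Set A) := by rw [hgens]; trivial
  induction ha using Algebra.adjoin_induction with
  | mem x hx =>
    refine ⟨1, Polynomial.C (∏ y ∈ gens.erase x, r y) * c x, ?_⟩
    rw [pow_one, ← Finset.prod_erase_mul _ _ hx, map_mul, mul_assoc, hrc, map_mul, Polynomial.aeval_C]
  | algebraMap t => exact ⟨0, Polynomial.C t, by simp⟩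
  | add x y _ _ hx hy =>
    obtain ⟨N, c1, h1⟩ := hx
    obtain ⟨M, c2, h2⟩ := hy
    refine ⟨N + M, Polynomial.C ((∏ x ∈ gens, r x) ^ M) * c1 + Polynomial.C ((∏ x ∈ gens, r x) ^ N) * c2, ?_⟩
    rw [map_add, map_mul, map_mul, ← h1, ← h2, Polynomial.aeval_C, Polynomial.aeval_C, map_pow, map_pow]
    ring
  | mul x y _ _ hx hy =>
    obtain ⟨N, c1, h1⟩ := hx
    obtain ⟨M, c2, h2⟩ := hy
    refine ⟨N + M, c1 * c2, ?_⟩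
    rw [map_mul, ← h1, ← h2]
    ring


theorem finSucc_map {R R' : Type} [CommRing R] [CommRing R'] (f : R →+* R') (e : ℕ)
    (q : MvPolynomial (Fin (e + 1)) R) :
    MvPolynomial.finSuccEquiv R' e (MvPolynomial.map f q) =
      (MvPolynomial.finSuccEquiv R e q).map (MvPolynomial.map f) := by
  ext i m
  rw [MvPolynomial.finSuccEquiv_coeff_coeff, MvPolynomial.coeff_map, Polynomial.coeff_map, MvPolynomial.coeff_map,
    MvPolynomial.finSuccEquiv_coeff_coeff]

theorem hilbert_lemma (K : Type) [Field K] [CharZero K] (ι : Type) (e : ℕ)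
    (P : Polynomial (MvPolynomial (Fin e) (MvPolynomial ι K))) (hPm : P.Monic)
    (hP : Irreducible (P.map (algebraMap (MvPolynomial (Fin e) (MvPolynomial ι K))
      (FractionRing (MvPolynomial (Fin e) (MvPolynomial ι K))))))
    (F0 : MvPolynomial ι K) (hF0 : F0 ≠ 0) :
    ∃ H : Set (ι → K), IsHilbertSubset K ι H ∧ ∀ t ∈ H, MvPolynomial.eval t F0 ≠ 0 ∧
      Prime (P.map (MvPolynomial.map (MvPolynomial.eval t))) := by
  let F := FractionRing (MvPolynomial ι K)
  let P2 := (MvPolynomial.finSuccEquiv (MvPolynomial ι K) e).symm P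
  let p := MvPolynomial.map (algebraMap (MvPolynomial ι K) F) P2
  have hirr : Irreducible p := by
    rw [← MulEquiv.irreducible_iff (MvPolynomial.finSuccEquiv F e), finSucc_map, AlgEquiv.apply_symm_apply]
    have hinj : Function.Injective ((algebraMap (MvPolynomial (Fin e) (MvPolynomial ι K))
      (FractionRing (MvPolynomial (Fin e) (MvPolynomial ι K)))).comp MvPolynomial.C) :=
      fun a b h => MvPolynomial.C_injective _ _ (IsFractionRing.injective
        (MvPolynomial (Fin e) (MvPolynomial ι K)) _ h)
    let ψ : MvPolynomial (Fin e) F →+* FractionRing (MvPolynomial (Fin e) (MvPolynomial ι K)) :=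
      MvPolynomial.eval₂Hom (IsFractionRing.lift hinj) (fun i => algebraMap (MvPolynomial (Fin e) (MvPolynomial ι K)) _ (MvPolynomial.X i))
    have hψ : ψ.comp (MvPolynomial.map (algebraMap (MvPolynomial ι K) F)) = algebraMap _ _ := by
      apply MvPolynomial.ringHom_ext
      · intro r
        simp only [RingHom.comp_apply, MvPolynomial.map_C, ψ, MvPolynomial.coe_eval₂Hom, MvPolynomial.eval₂_C]
        rw [IsFractionRing.lift_algebraMap]
        rfl
      · intro i
        simp [ψ]
    refine Polynomial.Monic.irreducible_of_irreducible_map ψ _ (hPm.map _) ?_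
    rw [Polynomial.map_map, hψ]
    exact hP
  refine ⟨_, ⟨e + 1, 1, 1, fun _ => p, fun _ => F0, fun _ => hirr, ?_, rfl⟩, ?_⟩
  · by_contra hcon
    push Not at hcon
    exact hF0 (MvPolynomial.funext fun t => by rw [hcon t 0, map_zero])
  · rintro t ⟨⟨_, h0⟩, h1⟩
    refine ⟨h0, ?_⟩
    obtain ⟨q, hq, hqi⟩ := h1 0
    have hqe : q = MvPolynomial.map (MvPolynomial.eval t) P2 := by
      ext m
      obtain ⟨a, b, hb, h2, h3⟩ := hq m
      rw [MvPolynomial.coeff_map] at h2 ⊢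
      rw [← map_mul] at h2
      have h4 := IsFractionRing.injective (MvPolynomial ι K) F h2
      rw [← h4, map_mul] at h3
      exact mul_left_cancel₀ hb h3
    have h5 : Prime (MvPolynomial.finSuccEquiv K e q) := by
      rw [MulEquiv.prime_iff]
      exact hqi.prime
    rw [hqe, finSucc_map, AlgEquiv.apply_symm_apply] at h5
    exact h5


theorem trdeg_quot_aux (K A' : Type) [Field K] [CommRing A'] [IsDomain A'] [Algebra K A'] (e : ℕ)
    (z : Fin e → A') (hz : Function.Injective (MvPolynomial.aeval z : MvPolynomial (Fin e) K →ₐ[K] A'))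
    (θ : A') (P : Polynomial (MvPolynomial (Fin e) K)) (hPm : P.Monic)
    (hP : Polynomial.eval₂ (MvPolynomial.aeval z : MvPolynomial (Fin e) K →ₐ[K] A').toRingHom θ P = 0)
    (g : MvPolynomial (Fin e) K) (hg0 : g ≠ 0)
    (hg : ∀ a : A', ∃ (N : ℕ) (c : Polynomial (MvPolynomial (Fin e) K)),
      (MvPolynomial.aeval z g) ^ N * a =
        Polynomial.eval₂ (MvPolynomial.aeval z : MvPolynomial (Fin e) K →ₐ[K] A').toRingHom θ c) :
    Algebra.trdeg K A' = (e : Cardinal) := by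
  letI : Algebra (MvPolynomial (Fin e) K) A' := (MvPolynomial.aeval z : MvPolynomial (Fin e) K →ₐ[K] A').toRingHom.toAlgebra
  haveI : IsScalarTower K (MvPolynomial (Fin e) K) A' := IsScalarTower.of_algebraMap_eq fun x =>
    ((MvPolynomial.aeval z : MvPolynomial (Fin e) K →ₐ[K] A').commutes x).symm
  haveI : FaithfulSMul (MvPolynomial (Fin e) K) A' := (faithfulSMul_iff_algebraMap_injective _ _).2 hz
  have hθ : IsIntegral (MvPolynomial (Fin e) K) θ := ⟨P, hPm, hP⟩
  haveI : Algebra.IsAlgebraic (MvPolynomial (Fin e) K) A' := ⟨fun a => by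
    obtain ⟨N, c, hc⟩ := hg a
    refine IsAlgebraic.iff_exists_smul_integral.2 ⟨g ^ N, pow_ne_zero _ hg0, ?_⟩
    have h1 : (g ^ N) • a = Polynomial.aeval θ c := by
      rw [Algebra.smul_def, map_pow]; exact hc
    rw [h1]
    exact IsIntegral.of_mem_of_fg _ hθ.fg_adjoin_singleton _ (Polynomial.aeval_mem_adjoin_singleton _ _)⟩
  rw [← trdeg_add_eq K (MvPolynomial (Fin e) K) (A := A'), trdeg_eq_zero (R := MvPolynomial (Fin e) K) (A := A'),
      MvPolynomial.trdeg_of_isDomain]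
  simp

theorem general_thm (K : Type) [Field K] [CharZero K] (ι : Type) [Finite ι] (A : Type) [CommRing A] [IsDomain A]
    [Algebra (MvPolynomial ι K) A] [Algebra K A] [IsScalarTower K (MvPolynomial ι K) A]
    [hft : Algebra.FiniteType (MvPolynomial ι K) A]
    (hinj : Function.Injective (algebraMap (MvPolynomial ι K) A)) (e : ℕ)
    (htr : Algebra.trdeg (MvPolynomial ι K) A = (e : Cardinal)) :
    ∃ H : Set (ι → K), IsHilbertSubset K ι H ∧ ∀ t ∈ H,
      ((RingHom.ker (MvPolynomial.eval t)).map (algebraMap (MvPolynomial ι K) A)).IsPrime ∧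
      ringKrullDim (A ⧸ ((RingHom.ker (MvPolynomial.eval t)).map (algebraMap (MvPolynomial ι K) A)))
        = (e : WithBot ℕ∞) := by
  haveI : FaithfulSMul (MvPolynomial ι K) A := (faithfulSMul_iff_algebraMap_injective _ _).2 hinj
  obtain ⟨z, hz⟩ : ∃ z : Fin e → A, AlgebraicIndependent (MvPolynomial ι K) z := by
    obtain ⟨κ, x, hx⟩ := exists_isTranscendenceBasis' (MvPolynomial ι K) A
    have h1 := hx.cardinalMk_eq_trdeg
    rw [htr, ← Cardinal.mk_fin e] at h1
    obtain ⟨f⟩ := Cardinal.eq.1 h1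
    exact ⟨x ∘ f.symm, hx.1.comp _ f.symm.injective⟩
  let S := MvPolynomial (Fin e) (MvPolynomial ι K)
  let az : S →ₐ[MvPolynomial ι K] A := MvPolynomial.aeval z
  have hazinj : Function.Injective az := hz
  letI : Algebra S A := az.toRingHom.toAlgebra
  haveI : IsScalarTower (MvPolynomial ι K) S A := IsScalarTower.of_algebraMap_eq fun x => (az.commutes x).symm
  haveI : FaithfulSMul S A := (faithfulSMul_iff_algebraMap_injective _ _).2 hazinj
  haveI : Algebra.FiniteType S A := Algebra.FiniteType.of_restrictScalars_finiteType (MvPolynomial ι K) S A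
  haveI : Algebra.IsAlgebraic S A := by
    rw [← trdeg_eq_zero_iff]
    have h2 := trdeg_add_eq (MvPolynomial ι K) S (A := A)
    rw [MvPolynomial.trdeg_of_isDomain, htr] at h2
    simp only [Cardinal.mk_fin, Cardinal.lift_natCast] at h2
    exact Cardinal.eq_of_add_eq_add_left (h2.trans (add_zero _).symm) (Cardinal.natCast_lt_aleph0)
  obtain ⟨θ, P, g, hg0, hPm, hP0, hker, hPirr, hg⟩ := prim_data S A hazinj
  have hgz : az g ≠ 0 := (map_ne_zero_iff _ hazinj).2 hg0
  obtain ⟨f, hf0, hf⟩ := generic_nzd (MvPolynomial ι K) A (az g) hgz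
  obtain ⟨m, hm⟩ := MvPolynomial.ne_zero_iff.1 hg0
  obtain ⟨H, hH, hHt⟩ := hilbert_lemma K ι e P hPm hPirr (f * MvPolynomial.coeff m g) (mul_ne_zero hf0 hm)
  refine ⟨H, hH, fun t ht => ?_⟩
  obtain ⟨h1, hprime⟩ := hHt t ht
  rw [map_mul] at h1
  have hft1 := left_ne_zero_of_mul h1
  have hgt1 := right_ne_zero_of_mul h1
  have hsurj : Function.Surjective (MvPolynomial.eval t) := fun c => ⟨MvPolynomial.C c, by simp⟩
  have hmax : (RingHom.ker (MvPolynomial.eval t)).IsMaximal := RingHom.ker_isMaximal_of_surjective _ hsurj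
  have hgt : MvPolynomial.map (MvPolynomial.eval t) g ≠ 0 := fun h => hgt1 (by
    rw [← MvPolynomial.coeff_map, h, MvPolynomial.coeff_zero])
  obtain ⟨hI, hI2⟩ := fibre_core (MvPolynomial.eval t) hsurj e z θ P g _ rfl
    (fun c hc => hker c hc) hP0 hg hPm hprime hgt (hf _ hmax hft1)
  refine ⟨hI, ?_⟩
  set I := (RingHom.ker (MvPolynomial.eval t)).map (algebraMap (MvPolynomial ι K) A) with hIdef
  haveI : IsDomain (A ⧸ I) := Ideal.Quotient.isDomain I
  haveI : Algebra.FiniteType K A := Algebra.FiniteType.trans (S := MvPolynomial ι K) inferInstance hft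
  haveI : Algebra.FiniteType K (A ⧸ I) := inferInstance
  let zb : MvPolynomial (Fin e) K →ₐ[K] A ⧸ I := MvPolynomial.aeval (fun i => Ideal.Quotient.mk I (z i))
  have hcomp : ∀ s : S, zb (MvPolynomial.map (MvPolynomial.eval t) s) = Ideal.Quotient.mk I (az s) := by
    have : zb.toRingHom.comp (MvPolynomial.map (MvPolynomial.eval t)) = (Ideal.Quotient.mk I).comp az.toRingHom := by
      apply MvPolynomial.ringHom_ext
      · intro r
        simp only [RingHom.comp_apply, MvPolynomial.map_C]
        change zb (MvPolynomial.C _) = Ideal.Quotient.mk I (az (MvPolynomial.C r))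
        rw [MvPolynomial.aeval_C, MvPolynomial.aeval_C, IsScalarTower.algebraMap_apply K A (A ⧸ I),
          IsScalarTower.algebraMap_apply K (MvPolynomial ι K) A]
        change Ideal.Quotient.mk I _ = _
        rw [Ideal.Quotient.eq, ← map_sub]
        exact Ideal.mem_map_of_mem _ (by simp [RingHom.mem_ker])
      · intro i
        simp only [RingHom.comp_apply, MvPolynomial.map_X]
        change zb (MvPolynomial.X _) = Ideal.Quotient.mk I (az (MvPolynomial.X i))
        rw [MvPolynomial.aeval_X, MvPolynomial.aeval_X]
    exact fun s => RingHom.congr_fun this s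
  have hcomp2 : zb.toRingHom.comp (MvPolynomial.map (MvPolynomial.eval t)) = (Ideal.Quotient.mk I).comp az.toRingHom :=
    RingHom.ext hcomp
  have hev : ∀ c : Polynomial S, Polynomial.eval₂ zb.toRingHom (Ideal.Quotient.mk I θ)
      (c.map (MvPolynomial.map (MvPolynomial.eval t))) = Ideal.Quotient.mk I (Polynomial.aeval θ c) := by
    intro c
    rw [Polynomial.eval₂_map, hcomp2, Polynomial.aeval_def, Polynomial.hom_eval₂]
    rfl
  have hmapsurj : Function.Surjective (MvPolynomial.map (σ := Fin e) (MvPolynomial.eval t)) :=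
    MvPolynomial.map_surjective _ hsurj
  apply dim_of_trdeg K (A ⧸ I) e
  refine (trdeg_quot_aux K (A ⧸ I) e (fun i => Ideal.Quotient.mk I (z i)) ?_ (Ideal.Quotient.mk I θ)
    (P.map (MvPolynomial.map (MvPolynomial.eval t))) (hPm.map _) ?_ _ hgt ?_)
  · rw [injective_iff_map_eq_zero]
    intro q hq
    obtain ⟨s, rfl⟩ := hmapsurj q
    refine hI2 s ?_
    have := hcomp s
    rw [← Ideal.Quotient.eq_zero_iff_mem]
    exact this.symm.trans hq
  · rw [hev, hP0, map_zero]
  · intro a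
    obtain ⟨a, rfl⟩ := Ideal.Quotient.mk_surjective a
    obtain ⟨N, c, hc⟩ := hg a
    refine ⟨N, c.map (MvPolynomial.map (MvPolynomial.eval t)), ?_⟩
    rw [hev, ← hc, map_mul, map_pow]
    congr 2
    exact hcomp g


theorem algInd_t {k C σ : Type} [CommRing k] [CommRing C] [Algebra k C] (x : σ → Polynomial C)
    (hx : AlgebraicIndependent k (fun i => (x i).coeff 0)) (F : MvPolynomial σ (Polynomial k))
    (hF : MvPolynomial.eval₂ (Polynomial.mapRingHom (algebraMap k C)) x F = 0) : F = 0 := by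
  have step : ∀ F : MvPolynomial σ (Polynomial k),
      MvPolynomial.eval₂ (Polynomial.mapRingHom (algebraMap k C)) x F = 0 →
      ∃ G : MvPolynomial σ (Polynomial k), F = MvPolynomial.C Polynomial.X * G ∧
        MvPolynomial.eval₂ (Polynomial.mapRingHom (algebraMap k C)) x G = 0 := by
    intro F hF
    have h0 : MvPolynomial.map (Polynomial.constantCoeff (R := k)) F = 0 := by
      have h1 := congrArg Polynomial.constantCoeff hF
      rw [← MvPolynomial.coe_eval₂Hom, ← RingHom.comp_apply, MvPolynomial.comp_eval₂Hom, map_zero] at h1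
      apply hx
      rw [map_zero, MvPolynomial.aeval_def, MvPolynomial.eval₂_map]
      rw [MvPolynomial.coe_eval₂Hom] at h1
      have h6 : (algebraMap k C).comp (Polynomial.constantCoeff (R := k)) =
          Polynomial.constantCoeff.comp (Polynomial.mapRingHom (algebraMap k C)) := by
        ext i <;> simp
      rw [h6]
      exact h1
    have h2 : (MvPolynomial.C Polynomial.X : MvPolynomial σ (Polynomial k)) ∣ F := by
      rw [MvPolynomial.C_dvd_iff_dvd_coeff]
      intro m
      rw [Polynomial.X_dvd_iff]
      have := congrArg (MvPolynomial.coeff m) h0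
      rwa [MvPolynomial.coeff_map, MvPolynomial.coeff_zero] at this
    obtain ⟨G, rfl⟩ := h2
    refine ⟨G, rfl, ?_⟩
    rw [MvPolynomial.eval₂_mul, MvPolynomial.eval₂_C, Polynomial.coe_mapRingHom, Polynomial.map_X] at hF
    ext i
    have h7 := congrArg (fun q => Polynomial.coeff q (i + 1)) hF
    simpa [Polynomial.coeff_X_mul] using h7
  have hall : ∀ n : ℕ, ∀ F : MvPolynomial σ (Polynomial k),
      MvPolynomial.eval₂ (Polynomial.mapRingHom (algebraMap k C)) x F = 0 →
      (MvPolynomial.C (Polynomial.X ^ n) : MvPolynomial σ (Polynomial k)) ∣ F := by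
    intro n
    induction n with
    | zero => intro F _; simp
    | succ n ih =>
      intro F hF
      obtain ⟨G, rfl, hG⟩ := step F hF
      rw [pow_succ', map_mul]
      exact mul_dvd_mul_left _ (ih G hG)
  ext m i
  have h3 := hall (i + 1) F hF
  rw [MvPolynomial.C_dvd_iff_dvd_coeff] at h3
  rw [(Polynomial.X_pow_dvd_iff.1 (h3 m)) i (Nat.lt_succ_self i)]
  simp

theorem algIndep_generic (K B Λ σ : Type) [Field K] [CommRing B] [Algebra K B] [Fintype Λ]
    (a : σ → Λ → B) (δ : Λ → K)
    (hy : AlgebraicIndependent K (fun i => ∑ x, algebraMap K B (δ x) * a i x)) :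
    AlgebraicIndependent K (Sum.elim (fun x => (MvPolynomial.X x : MvPolynomial Λ B))
      (fun i => ∑ x, MvPolynomial.C (a i x) * MvPolynomial.X x)) := by
  -- the deformed family
  let xx : Λ ⊕ σ → Polynomial (MvPolynomial Λ B) := Sum.elim
    (fun x => Polynomial.C (MvPolynomial.X x))
    (fun i => Polynomial.C (MvPolynomial.C (∑ x, algebraMap K B (δ x) * a i x)) +
      Polynomial.X * Polynomial.C (∑ x, MvPolynomial.C (a i x) * MvPolynomial.X x))
  have hxx : AlgebraicIndependent K (fun j => (xx j).coeff 0) := by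
    have h1 := AlgebraicIndependent.sumElim_comp hy (MvPolynomial.algebraicIndependent_X Λ B)
    convert h1 using 1
    funext j
    rcases j with j | j
    · simp [xx]
    · simp [xx, MvPolynomial.algebraMap_eq]
  let T : MvPolynomial Λ B →+* Polynomial (MvPolynomial Λ B) :=
    MvPolynomial.eval₂Hom (Polynomial.C.comp MvPolynomial.C)
      (fun x => Polynomial.C (MvPolynomial.C (algebraMap K B (δ x))) + Polynomial.X * Polynomial.C (MvPolynomial.X x))
  let sg : MvPolynomial (Λ ⊕ σ) K →+* MvPolynomial (Λ ⊕ σ) (Polynomial K) :=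
    MvPolynomial.eval₂Hom (MvPolynomial.C.comp Polynomial.C)
      (Sum.elim (fun x => MvPolynomial.C (Polynomial.C (δ x)) + MvPolynomial.C Polynomial.X * MvPolynomial.X (Sum.inl x))
        (fun i => MvPolynomial.X (Sum.inr i)))
  let bk : MvPolynomial (Λ ⊕ σ) (Polynomial K) →+* MvPolynomial (Λ ⊕ σ) K :=
    MvPolynomial.eval₂Hom (MvPolynomial.C.comp (Polynomial.evalRingHom 1))
      (Sum.elim (fun x => MvPolynomial.X (Sum.inl x) - MvPolynomial.C (δ x)) (fun i => MvPolynomial.X (Sum.inr i)))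
  have hbk : bk.comp sg = RingHom.id _ := by
    apply MvPolynomial.ringHom_ext
    · intro r; simp [bk, sg]
    · rintro (x | i)
      · simp [bk, sg]
      · simp [bk, sg]
  have hcomm : T.comp (MvPolynomial.aeval (R := K) (Sum.elim (fun x => (MvPolynomial.X x : MvPolynomial Λ B))
      (fun i => ∑ x, MvPolynomial.C (a i x) * MvPolynomial.X x))).toRingHom =
      (MvPolynomial.eval₂Hom (Polynomial.mapRingHom (algebraMap K (MvPolynomial Λ B))) xx).comp sg := by
    apply MvPolynomial.ringHom_ext
    · intro r
      simp [T, sg, xx, MvPolynomial.algebraMap_apply]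
    · rintro (x | i)
      · simp [T, sg, xx, MvPolynomial.algebraMap_apply]
      · simp only [T, sg, xx, RingHom.comp_apply, AlgHom.toRingHom_eq_coe, RingHom.coe_coe, MvPolynomial.aeval_X, Sum.elim_inr,
          MvPolynomial.coe_eval₂Hom, MvPolynomial.eval₂_X, map_sum, map_mul, MvPolynomial.eval₂_C, mul_add,
          Finset.sum_add_distrib, Finset.mul_sum, MvPolynomial.eval₂_sum, MvPolynomial.eval₂_mul]
        refine congrArg₂ (· + ·) (Finset.sum_congr rfl fun x _ => ?_) (Finset.sum_congr rfl fun x _ => ?_)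
        · exact mul_comm _ _
        · exact mul_left_comm _ _ _
  rw [AlgebraicIndependent, injective_iff_map_eq_zero]
  intro F hF
  have h1 := RingHom.congr_fun hcomm F
  have h2 : T (MvPolynomial.aeval (R := K) (Sum.elim (fun x => (MvPolynomial.X x : MvPolynomial Λ B))
      (fun i => ∑ x, MvPolynomial.C (a i x) * MvPolynomial.X x)) F) = 0 := by rw [hF, map_zero]
  have h3 : MvPolynomial.eval₂ (Polynomial.mapRingHom (algebraMap K (MvPolynomial Λ B))) xx (sg F) = 0 :=
    h1.symm.trans h2
  have h4 := algInd_t xx hxx _ h3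
  have h5 := RingHom.congr_fun hbk F
  rw [RingHom.comp_apply, h4, map_zero] at h5
  exact h5.symm


theorem fibre_ideal (K T ι Λ σ : Type) [Field K] [CommRing T] [Algebra K T] [Fintype Λ] (p : Ideal T)
    (eq : ι ≃ Λ ⊕ σ) (b : σ → Λ → T) (lam : ι → K)
    (v : ι → MvPolynomial Λ (T ⧸ p))
    (hv1 : ∀ x, v (eq.symm (Sum.inl x)) = MvPolynomial.X x)
    (hv2 : ∀ i, v (eq.symm (Sum.inr i)) =
      ∑ x, MvPolynomial.C (Ideal.Quotient.mk p (b i x)) * MvPolynomial.X x)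
    (J : Ideal T) (hJ : J = p ⊔ Ideal.span (Set.range fun i => algebraMap K T (lam (eq.symm (Sum.inr i))) -
      ∑ x, b i x * algebraMap K T (lam (eq.symm (Sum.inl x)))))
    (I : Ideal (MvPolynomial Λ (T ⧸ p)))
    (hI : I = (RingHom.ker (MvPolynomial.eval lam)).map
      (MvPolynomial.aeval v : MvPolynomial ι K →ₐ[K] MvPolynomial Λ (T ⧸ p)).toRingHom) :
    Nonempty ((T ⧸ J) ≃+* (MvPolynomial Λ (T ⧸ p) ⧸ I)) := by
  have hpJ : p ≤ J := by rw [hJ]; exact le_sup_left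
  have hQJ : ∀ i, algebraMap K T (lam (eq.symm (Sum.inr i))) -
      ∑ x, b i x * algebraMap K T (lam (eq.symm (Sum.inl x))) ∈ J := fun i => by
    rw [hJ]; exact Ideal.mem_sup_right (Ideal.subset_span ⟨i, rfl⟩)
  let α : T →+* (MvPolynomial Λ (T ⧸ p) ⧸ I) :=
    (Ideal.Quotient.mk I).comp (MvPolynomial.C.comp (Ideal.Quotient.mk p))
  have hαK : ∀ c : K, α (algebraMap K T c) = Ideal.Quotient.mk I (algebraMap K _ c) := fun c => by
    simp only [α, RingHom.comp_apply]
    rw [IsScalarTower.algebraMap_apply K (T ⧸ p) (MvPolynomial Λ (T ⧸ p)), MvPolynomial.algebraMap_eq]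
    rfl
  have hvI : ∀ x : ι, Ideal.Quotient.mk I (v x) = α (algebraMap K T (lam x)) := by
    intro x
    rw [hαK, Ideal.Quotient.eq, hI]
    have : v x - algebraMap K _ (lam x) =
      (MvPolynomial.aeval v : MvPolynomial ι K →ₐ[K] MvPolynomial Λ (T ⧸ p)).toRingHom
        (MvPolynomial.X x - MvPolynomial.C (lam x)) := by simp [MvPolynomial.algebraMap_apply]
    rw [this]
    exact Ideal.mem_map_of_mem _ (by simp [RingHom.mem_ker])
  have hX : ∀ x : Λ, Ideal.Quotient.mk I (MvPolynomial.X x) = α (algebraMap K T (lam (eq.symm (Sum.inl x)))) := by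
    intro x
    rw [← hv1, hvI]
  have hsurj : Function.Surjective α := by
    intro q
    obtain ⟨q, rfl⟩ := Ideal.Quotient.mk_surjective q
    induction q using MvPolynomial.induction_on with
    | C r =>
      obtain ⟨r, rfl⟩ := Ideal.Quotient.mk_surjective r
      exact ⟨r, rfl⟩
    | add q1 q2 h1 h2 =>
      obtain ⟨a1, h1⟩ := h1
      obtain ⟨a2, h2⟩ := h2
      exact ⟨a1 + a2, by rw [map_add, map_add, h1, h2]⟩
    | mul_X q x h =>
      obtain ⟨a1, h1⟩ := h
      exact ⟨a1 * algebraMap K T (lam (eq.symm (Sum.inl x))), by rw [map_mul, map_mul, h1, hX]⟩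
  have hker : RingHom.ker α = J := by
    apply le_antisymm
    · let β : MvPolynomial Λ (T ⧸ p) →+* T ⧸ J := MvPolynomial.eval₂Hom (Ideal.Quotient.factor hpJ)
        (fun x => Ideal.Quotient.mk J (algebraMap K T (lam (eq.symm (Sum.inl x)))))
      have hβv : ∀ x, β (v x) = Ideal.Quotient.mk J (algebraMap K T (lam x)) := by
        intro x
        obtain ⟨x, rfl⟩ := eq.symm.surjective x
        rcases x with x | i
        · rw [hv1]; simp [β]
        · rw [hv2, map_sum]
          have h1 := Ideal.Quotient.eq.2 (hQJ i)
          rw [h1, map_sum]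
          refine Finset.sum_congr rfl fun x _ => ?_
          rw [map_mul, map_mul]
          simp [β]
      have hβ : β.comp (MvPolynomial.aeval v : MvPolynomial ι K →ₐ[K] MvPolynomial Λ (T ⧸ p)).toRingHom =
          ((Ideal.Quotient.mk J).comp (algebraMap K T)).comp (MvPolynomial.eval lam) := by
        apply MvPolynomial.ringHom_ext
        · intro c
          simp only [RingHom.comp_apply, MvPolynomial.eval_C]
          change β (MvPolynomial.aeval v (MvPolynomial.C c)) = _
          rw [MvPolynomial.aeval_C, IsScalarTower.algebraMap_apply K (T ⧸ p) (MvPolynomial Λ (T ⧸ p)),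
            MvPolynomial.algebraMap_eq]
          simp only [β, MvPolynomial.coe_eval₂Hom, MvPolynomial.eval₂_C]
          rfl
        · intro x
          simp only [RingHom.comp_apply, MvPolynomial.eval_X]
          change β (MvPolynomial.aeval v (MvPolynomial.X x)) = _
          rw [MvPolynomial.aeval_X, hβv]
      have hβI : I ≤ RingHom.ker β := by
        rw [hI, Ideal.map_le_iff_le_comap]
        intro F hF
        rw [RingHom.mem_ker] at hF
        have := RingHom.congr_fun hβ F
        rw [RingHom.comp_apply, RingHom.comp_apply, hF, map_zero] at this
        exact this
      intro f hf
      have hf' : MvPolynomial.C (Ideal.Quotient.mk p f) ∈ I := Ideal.Quotient.eq_zero_iff_mem.1 hf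
      have h2 : β (MvPolynomial.C (Ideal.Quotient.mk p f)) = 0 := hβI hf'
      rw [← Ideal.Quotient.eq_zero_iff_mem, ← h2]
      simp [β]
    · rw [hJ]
      refine sup_le ?_ (Ideal.span_le.2 ?_)
      · intro f hf
        rw [RingHom.mem_ker]
        simp only [α, RingHom.comp_apply]
        rw [Ideal.Quotient.eq_zero_iff_mem.2 hf, map_zero, map_zero]
      · rintro _ ⟨i, rfl⟩
        rw [SetLike.mem_coe, RingHom.mem_ker, map_sub, ← hvI, hv2, map_sum, map_sum, sub_eq_zero]
        refine Finset.sum_congr rfl fun x _ => ?_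
        rw [map_mul, map_mul, hX]
        rfl
  rw [← hker]
  exact ⟨RingHom.quotientKerEquivOfSurjective hsurj⟩

theorem abstract_main (K T ι Λ : Type) [Field K] [CharZero K] [CommRing T] [Algebra K T] [Algebra.FiniteType K T]
    [Fintype Λ] [Finite ι] (p : Ideal T) [p.IsPrime] (d ρ : ℕ)
    (hd : Algebra.trdeg K (T ⧸ p) = (d : Cardinal)) (hρ : ρ ≤ d)
    (eq : ι ≃ Λ ⊕ Fin ρ) (b : Fin ρ → Λ → T) (δ : Λ → K)
    (hy : AlgebraicIndependent K (fun i => ∑ x, algebraMap K (T ⧸ p) (δ x) * Ideal.Quotient.mk p (b i x))) :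
    ∃ H : Set (ι → K), IsHilbertSubset K ι H ∧ ∀ lam ∈ H, ∀ J : Ideal T,
      J = p ⊔ Ideal.span (Set.range fun i => algebraMap K T (lam (eq.symm (Sum.inr i))) -
        ∑ x, b i x * algebraMap K T (lam (eq.symm (Sum.inl x)))) →
      J.IsPrime ∧ ringKrullDim (T ⧸ J) = ((d - ρ : ℕ) : WithBot ℕ∞) := by
  have hai := algIndep_generic K (T ⧸ p) Λ (Fin ρ) (fun i x => Ideal.Quotient.mk p (b i x)) δ hy
  let v : ι → MvPolynomial Λ (T ⧸ p) := Sum.elim (fun x => (MvPolynomial.X x : MvPolynomial Λ (T ⧸ p)))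
      (fun i => ∑ x, MvPolynomial.C (Ideal.Quotient.mk p (b i x)) * MvPolynomial.X x) ∘ eq
  have hv : AlgebraicIndependent K v := hai.comp eq eq.injective
  let av : MvPolynomial ι K →ₐ[K] MvPolynomial Λ (T ⧸ p) := MvPolynomial.aeval v
  letI : Algebra (MvPolynomial ι K) (MvPolynomial Λ (T ⧸ p)) := av.toRingHom.toAlgebra
  haveI : IsScalarTower K (MvPolynomial ι K) (MvPolynomial Λ (T ⧸ p)) :=
    IsScalarTower.of_algebraMap_eq fun x => (av.commutes x).symm
  have hinj : Function.Injective (algebraMap (MvPolynomial ι K) (MvPolynomial Λ (T ⧸ p))) := hv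
  haveI : FaithfulSMul (MvPolynomial ι K) (MvPolynomial Λ (T ⧸ p)) :=
    (faithfulSMul_iff_algebraMap_injective _ _).2 hinj
  haveI : Algebra.FiniteType K (T ⧸ p) := inferInstance
  haveI : Algebra.FiniteType K (MvPolynomial Λ (T ⧸ p)) :=
    Algebra.FiniteType.trans (S := T ⧸ p) inferInstance inferInstance
  haveI : Algebra.FiniteType (MvPolynomial ι K) (MvPolynomial Λ (T ⧸ p)) :=
    Algebra.FiniteType.of_restrictScalars_finiteType K (MvPolynomial ι K) _
  have htr : Algebra.trdeg (MvPolynomial ι K) (MvPolynomial Λ (T ⧸ p)) = ((d - ρ : ℕ) : Cardinal) := by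
    have h1 := trdeg_add_eq K (MvPolynomial ι K) (A := MvPolynomial Λ (T ⧸ p))
    have h2 := trdeg_add_eq K (T ⧸ p) (A := MvPolynomial Λ (T ⧸ p))
    rw [hd, MvPolynomial.trdeg_of_isDomain] at h2
    rw [MvPolynomial.trdeg_of_isDomain, ← h2, Cardinal.mk_congr eq] at h1
    simp only [Cardinal.mk_sum, Cardinal.mk_fin, Cardinal.lift_id, Cardinal.mk_fintype, Cardinal.lift_add, Cardinal.lift_natCast,
      Fintype.card_sum, Fintype.card_fin, Nat.cast_add] at h1
    have h3 : (d : Cardinal) = (ρ : Cardinal) + ((d - ρ : ℕ) : Cardinal) := by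
      rw [← Nat.cast_add, Nat.add_sub_cancel' hρ]
    rw [h3] at h1
    refine Cardinal.eq_of_add_eq_add_left (a := (Fintype.card Λ + ρ : Cardinal)) (h1.trans (by ring)) ?_
    rw [← Nat.cast_add]
    exact Cardinal.natCast_lt_aleph0
  obtain ⟨H, hH, hHt⟩ := general_thm K ι (MvPolynomial Λ (T ⧸ p)) hinj (d - ρ) htr
  refine ⟨H, hH, fun lam hlam J hJ => ?_⟩
  obtain ⟨hP, hdim⟩ := hHt lam hlam
  obtain ⟨E⟩ := fibre_ideal K T ι Λ (Fin ρ) p eq b lam v (fun x => by simp [v]) (fun i => by simp [v]) J hJ _ rfl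
  have hdom : IsDomain (MvPolynomial Λ (T ⧸ p) ⧸ ((RingHom.ker (MvPolynomial.eval lam)).map
      (MvPolynomial.aeval v : MvPolynomial ι K →ₐ[K] MvPolynomial Λ (T ⧸ p)).toRingHom)) :=
    (Ideal.Quotient.isDomain_iff_prime _).2 hP
  refine ⟨?_, ?_⟩
  · rw [← Ideal.Quotient.isDomain_iff_prime]
    exact MulEquiv.isDomain _ E.toMulEquiv
  · exact (ringKrullDim_eq_of_ringEquiv (S := MvPolynomial Λ (T ⧸ p) ⧸ ((RingHom.ker (MvPolynomial.eval lam)).map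
      (MvPolynomial.aeval v : MvPolynomial ι K →ₐ[K] MvPolynomial Λ (T ⧸ p)).toRingHom)) E).trans hdim


theorem coord_indep (K : Type) [Field K] (s : ℕ) (p : Ideal (MvPolynomial (Fin s) K)) [p.IsPrime] (d ρ : ℕ)
    (hd : Algebra.trdeg K (MvPolynomial (Fin s) K ⧸ p) = (d : Cardinal)) (hρ : ρ ≤ d) :
    ∃ j : Fin ρ → Fin s, AlgebraicIndependent K (fun i => Ideal.Quotient.mk p (MvPolynomial.X (j i))) := by
  let y : Fin s → MvPolynomial (Fin s) K ⧸ p := fun i => Ideal.Quotient.mk p (MvPolynomial.X i)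
  have htop : Algebra.adjoin K (Set.range y) = ⊤ := by
    rw [eq_top_iff]
    intro b _
    obtain ⟨b, rfl⟩ := Ideal.Quotient.mk_surjective b
    rw [Algebra.adjoin_range_eq_range_aeval]
    refine ⟨b, ?_⟩
    have : (MvPolynomial.aeval y : MvPolynomial (Fin s) K →ₐ[K] _) = Ideal.Quotient.mkₐ K p := by
      apply MvPolynomial.algHom_ext
      intro i
      simp [y]
    change MvPolynomial.aeval y b = _
    rw [this]
    rfl
  haveI : Algebra.IsAlgebraic (Algebra.adjoin K (Set.range y)) (MvPolynomial (Fin s) K ⧸ p) := ⟨fun b =>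
    isAlgebraic_algebraMap (⟨b, by rw [htop]; trivial⟩ : Algebra.adjoin K (Set.range y))⟩
  obtain ⟨t, ht, htb⟩ := exists_isTranscendenceBasis_subset (R := K) (Set.range y)
  have hc := htb.cardinalMk_eq_trdeg
  rw [hd] at hc
  have hle : Cardinal.mk (Fin ρ) ≤ Cardinal.mk t := by
    rw [hc, Cardinal.mk_fin]; exact_mod_cast hρ
  obtain ⟨f⟩ := hle
  choose j hj using fun i => ht (f i).2
  refine ⟨j, ?_⟩
  have h1 := htb.1.comp f f.injective
  convert h1 using 1
  funext i
  exact hj i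

def lamEquiv (s ρ : ℕ) (D : Fin ρ → ℕ) [∀ x : LamIdx s ρ D, Decidable (x.2.1 = 0)] :
    LamIdx s ρ D ≃ {x : LamIdx s ρ D // x.2.1 ≠ 0} ⊕ Fin ρ where
  toFun x := if h : x.2.1 = 0 then Sum.inr x.1 else Sum.inl ⟨x, h⟩
  invFun := Sum.elim (fun x => x.1) (fun i => ⟨i, ⟨0, by simp⟩⟩)
  left_inv := by
    rintro ⟨i, m, hm⟩
    by_cases h : m = 0
    · subst h; simp only [dif_pos]; rfl
    · simp only [h, dif_neg, not_false_eq_true]; rfl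
  right_inv := by
    rintro (⟨x, hx⟩ | i)
    · exact dif_neg hx
    · exact dif_pos rfl

theorem lamEquiv_symm_inl (s ρ : ℕ) (D : Fin ρ → ℕ) [∀ x : LamIdx s ρ D, Decidable (x.2.1 = 0)]
    (x : {x : LamIdx s ρ D // x.2.1 ≠ 0}) : (lamEquiv s ρ D).symm (Sum.inl x) = x.1 := rfl

theorem lamEquiv_symm_inr (s ρ : ℕ) (D : Fin ρ → ℕ) [∀ x : LamIdx s ρ D, Decidable (x.2.1 = 0)]
    (i : Fin ρ) : (lamEquiv s ρ D).symm (Sum.inr i) = ⟨i, ⟨0, by simp⟩⟩ := rfl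


/-- `K` of characteristic `0`, `p ⊆ K[Y]` prime with `dim K[Y]/p = d > 0`,
`0 < ρ ≤ d`, `D_i ≥ 1`.  There is a Hilbert subset `H` of `K^{N_{D_1}+…+N_{D_ρ}}` such
that for every `λ = (λ_1,…,λ_ρ) ∈ H` the ideal `⟨p, Q_{D_1}(λ_1,Y),…,Q_{D_ρ}(λ_ρ,Y)⟩` of
`K[Y]` is prime, with quotient of Krull dimension `d − ρ`. -/
theorem stmt_9 (K : Type) [Field K] [CharZero K] (s : ℕ)
    (p : Ideal (MvPolynomial (Fin s) K)) (hp : p.IsPrime)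
    (d : ℕ) (hd0 : 0 < d)
    (hd : ringKrullDim (MvPolynomial (Fin s) K ⧸ p) = (d : WithBot ℕ∞))
    (ρ : ℕ) (hρ0 : 0 < ρ) (hρd : ρ ≤ d) (D : Fin ρ → ℕ) (hD : ∀ i, 1 ≤ D i) :
    ∃ H : Set (LamIdx s ρ D → K), IsHilbertSubset K (LamIdx s ρ D) H ∧
      ∀ lam ∈ H,
        (p ⊔ Ideal.span (Set.range fun i : Fin ρ =>
          genPolyAt K s (D i) (fun mo => lam ⟨i, mo⟩))).IsPrime ∧
        ringKrullDim (MvPolynomial (Fin s) K ⧸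
          (p ⊔ Ideal.span (Set.range fun i : Fin ρ =>
            genPolyAt K s (D i) (fun mo => lam ⟨i, mo⟩)))) = ((d - ρ : ℕ) : WithBot ℕ∞) := by
  classical
  haveI := hp
  have hd' := trdeg_of_dim K (MvPolynomial (Fin s) K ⧸ p) d hd
  obtain ⟨j, hj⟩ := coord_indep K s p d ρ hd' hρd
  haveI : Finite (LamIdx s ρ D) := inferInstanceAs (Finite ((i : Fin ρ) × MonLE s (D i)))
  letI : Fintype (LamIdx s ρ D) := inferInstanceAs (Fintype ((i : Fin ρ) × MonLE s (D i)))
  letI : Fintype {x : LamIdx s ρ D // x.2.1 ≠ 0} := Fintype.ofFinite _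
  let b : Fin ρ → {x : LamIdx s ρ D // x.2.1 ≠ 0} → MvPolynomial (Fin s) K :=
    fun i x => if x.1.1 = i then - MvPolynomial.monomial x.1.2.1 1 else 0
  let δ : {x : LamIdx s ρ D // x.2.1 ≠ 0} → K :=
    fun x => if x.1.2.1 = Finsupp.single (j x.1.1) 1 then -1 else 0
  have hy : AlgebraicIndependent K (fun i => ∑ x, algebraMap K (MvPolynomial (Fin s) K ⧸ p) (δ x) *
      Ideal.Quotient.mk p (b i x)) := by
    convert hj using 1
    funext i
    have hx0 : (⟨i, ⟨Finsupp.single (j i) 1, by simpa using hD i⟩⟩ : LamIdx s ρ D).2.1 ≠ 0 := by simp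
    rw [Finset.sum_eq_single (⟨⟨i, ⟨Finsupp.single (j i) 1, by simpa using hD i⟩⟩, hx0⟩ :
      {x : LamIdx s ρ D // x.2.1 ≠ 0})]
    · simp [b, δ, MvPolynomial.X]
      ring
    · rintro ⟨⟨i', m, hm⟩, hx⟩ _ hne
      by_cases h1 : i' = i
      · subst h1
        by_cases h2 : m = Finsupp.single (j i') 1
        · subst h2; exact absurd rfl hne
        · simp [δ, h2]
      · simp [b, h1]
    · intro h; exact absurd (Finset.mem_univ _) h
  obtain ⟨H, hH, hHt⟩ := abstract_main K (MvPolynomial (Fin s) K) (LamIdx s ρ D)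
    {x : LamIdx s ρ D // x.2.1 ≠ 0} p d ρ hd' hρd (lamEquiv s ρ D) b δ hy
  refine ⟨H, hH, fun lam hlam => hHt lam hlam _ ?_⟩
  congr 3
  funext i
  have h1 : genPolyAt K s (D i) (fun mo => lam ⟨i, mo⟩) =
      ∑ y : LamIdx s ρ D, if y.1 = i then MvPolynomial.monomial y.2.1 (lam y) else 0 := by
    change _ = ∑ y : (i : Fin ρ) × MonLE s (D i), if y.1 = i then MvPolynomial.monomial y.2.1 (lam y) else 0
    rw [Fintype.sum_sigma, Finset.sum_eq_single i]
    · simp [genPolyAt]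
    · intro i' _ hne; simp [hne]
    · intro h; exact absurd (Finset.mem_univ _) h
  rw [h1, ← Equiv.sum_comp (lamEquiv s ρ D).symm, Fintype.sum_sum_type, add_comm, sub_eq_add_neg, ← Finset.sum_neg_distrib]
  congr 1
  · rw [Finset.sum_eq_single i]
    · exact if_pos rfl
    · intro i' _ hne; exact if_neg hne
    · intro h; exact absurd (Finset.mem_univ _) h
  · refine Finset.sum_congr rfl fun x _ => ?_
    rw [lamEquiv_symm_inl]
    by_cases h : x.1.1 = i
    · rw [if_pos h]
      have hb : b i x = - MvPolynomial.monomial x.1.2.1 1 := if_pos h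
      rw [hb, MvPolynomial.algebraMap_eq, neg_mul, neg_neg, mul_comm, MvPolynomial.C_mul_monomial,
        mul_one]
    · rw [if_neg h]
      have hb : b i x = 0 := if_neg h
      rw [hb, zero_mul, neg_zero]
end
end
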